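/- arXiv:1210.8390 — 7 statements merged into one kernel-verified Lean document; each statement's English description precedes it below -/
import Mathlib

section
/- Let n and r be positive integers, and let g = (t_1(n,r), t_2(n,r), …, t_n(n,r)) ∈ ℝ^n be the clique vector of the Turán graph T(n,r). Then the convex hull of the set of f-vectors (f_1(Δ), f_2(Δ), …, f_n(Δ)) ∈ ℝ^n of all r-colorable simplicial complexes Δ on n vertices is equal to the convex hull of the set of truncations {g^1, g^2, …, g^n} of g. -/
/-- The number of `k`-cliques of a graph `G`. -/
noncomputable def cliqueCount {V : Type*} (G : SimpleGraph V) (k : ℕ) : ℕ :=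
  {s : Finset V | G.IsNClique k s}.ncard

/-- `t_k(n,r)`: the number of `k`-cliques of the Turán graph `T(n,r)`. -/
noncomputable def turanCount (n r k : ℕ) : ℕ :=
  cliqueCount (SimpleGraph.turanGraph n r) k

/-- A (finite) simplicial complex on the vertex set `V`: a collection of subsets of `V`
closed under taking subsets and containing every singleton. -/
def IsComplex {V : Type*} [DecidableEq V] (Δ : Finset (Finset V)) : Prop :=
  (∀ F ∈ Δ, ∀ G ⊆ F, G ∈ Δ) ∧ (∀ v : V, {v} ∈ Δ)

/-- `f_k(Δ)`: the number of faces of `Δ` of cardinality `k`. -/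
def faceCount {V : Type*} [DecidableEq V] (Δ : Finset (Finset V)) (k : ℕ) : ℕ :=
  (Δ.filter fun F => F.card = k).card

/-- The underlying graph of a simplicial complex `Δ`: its edges are the
`2`-element faces of `Δ`. -/
def underlyingGraph {V : Type*} [DecidableEq V] (Δ : Finset (Finset V)) :
    SimpleGraph V where
  Adj x y := x ≠ y ∧ ({x, y} : Finset V) ∈ Δ
  symm := ⟨fun x y ⟨h1, h2⟩ => ⟨h1.symm, by rwa [Finset.pair_comm]⟩⟩
  loopless := ⟨fun x ⟨h, _⟩ => h rfl⟩

/-- The `k`-truncation of a vector `g ∈ ℝ^n` (coordinates numbered `1, …, n`). -/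
def trunc {n : ℕ} (g : Fin n → ℝ) (k : ℕ) : Fin n → ℝ :=
  fun i => if (i : ℕ) + 1 ≤ k then g i else 0

open Classical in
noncomputable def rcnt {V ι : Type*} [Fintype V] (c : V → ι) (Δ : Finset (Finset V))
    (C : Finset ι) (k : ℕ) : ℕ :=
  (Δ.filter fun F : Finset V => F.card = k ∧ Set.InjOn c (F : Set V) ∧ ∀ v ∈ F, c v ∈ C).card

open Classical in
noncomputable def rlink {V : Type*} [Fintype V] (Δ : Finset (Finset V)) (v : V) :
    Finset (Finset V) := Finset.univ.filter fun F : Finset V => insert v F ∈ Δ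

noncomputable def esy {ι : Type*} (x : ι → ℝ) (C : Finset ι) (k : ℕ) : ℝ :=
  (∏ i ∈ C, (1 + Polynomial.C (x i) * Polynomial.X)).coeff k

lemma esy_empty_succ {ι : Type*} (x : ι → ℝ) (k : ℕ) : esy x ∅ (k+1) = 0 := by
  simp [esy, Polynomial.coeff_one]

lemma esy_zero {ι : Type*} (x : ι → ℝ) (C : Finset ι) : esy x C 0 = 1 := by
  simp [esy, Polynomial.coeff_zero_prod]

lemma esy_insert {ι : Type*} [DecidableEq ι] (x : ι → ℝ) (C : Finset ι) (a : ι) (ha : a ∉ C)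
    (k : ℕ) : esy x (insert a C) (k+1) = esy x C (k+1) + x a * esy x C k := by
  unfold esy
  rw [Finset.prod_insert ha, add_mul, one_mul, Polynomial.coeff_add, mul_assoc,
    Polynomial.coeff_C_mul, Polynomial.coeff_X_mul]

lemma esy_nonneg {ι : Type*} (x : ι → ℝ) (hx : ∀ i, 0 ≤ x i) (C : Finset ι) :
    ∀ k, 0 ≤ esy x C k := by
  classical
  induction C using Finset.induction_on with
  | empty => intro k; cases k with
    | zero => simp [esy_zero]
    | succ k => simp [esy_empty_succ]
  | insert a C ha ih =>
    intro k; cases k with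
    | zero => simp [esy_zero]
    | succ k => rw [esy_insert x C a ha]; have := ih k; have := ih (k+1); have := hx a; positivity

lemma esy_lc {ι : Type*} (x : ι → ℝ) (hx : ∀ i, 0 ≤ x i) (C : Finset ι) :
    ∀ i j, i ≤ j → esy x C i * esy x C (j+1) ≤ esy x C (i+1) * esy x C j := by
  classical
  induction C using Finset.induction_on with
  | empty =>
    intro i j _
    rw [esy_empty_succ, esy_empty_succ]; simp
  | insert a C ha ih =>
    have hn := esy_nonneg x hx C
    have hxa := hx a
    intro i j hij
    rcases i with _ | i
    · rcases j with _ | j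
      · exact le_of_eq (mul_comm _ _)
      · rw [esy_insert x C a ha, esy_insert x C a ha, esy_insert x C a ha, esy_zero]
        have h1 := ih 0 (j+1) (by omega)
        rw [esy_zero] at h1 ⊢
        simp only [zero_add] at *
        have h2 : 0 ≤ x a * (x a * esy x C j) := mul_nonneg hxa (mul_nonneg hxa (hn _))
        have h3 : 0 ≤ esy x C 1 * (x a * esy x C j) := mul_nonneg (hn _) (mul_nonneg hxa (hn _))
        nlinarith
    · rcases j with _ | j
      · omega
      · rw [esy_insert x C a ha, esy_insert x C a ha, esy_insert x C a ha, esy_insert x C a ha]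
        have h1 := ih (i+1) (j+1) (by omega)
        have h2 := mul_le_mul_of_nonneg_left (ih i j (by omega)) (mul_nonneg hxa hxa)
        have h3 : esy x C i * esy x C (j+1+1) ≤ esy x C (i+1+1) * esy x C j := by
          rcases Nat.lt_or_ge i j with h | h
          · exact (ih i (j+1) (by omega)).trans (ih (i+1) j (by omega))
          · have : i = j := by omega
            subst this
            exact le_of_eq (mul_comm _ _)
        have h4 := mul_le_mul_of_nonneg_left h3 hxa
        nlinarith

lemma esy_zero_succ {ι : Type*} (x : ι → ℝ) (hx : ∀ i, 0 ≤ x i) (C : Finset ι) (k : ℕ)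
    (h : esy x C k = 0) : esy x C (k+1) = 0 := by
  have h1 := esy_lc x hx C 0 k (by omega)
  rw [h, esy_zero] at h1
  have := esy_nonneg x hx C (k+1)
  linarith

open Classical in
lemma rcnt_zero {V ι : Type*} [Fintype V] (c : V → ι) (Δ : Finset (Finset V))
    (C : Finset ι) : rcnt c Δ C 0 = if ∅ ∈ Δ then 1 else 0 := by
  unfold rcnt
  have : (Δ.filter fun F : Finset V => F.card = 0 ∧ Set.InjOn c (F : Set V) ∧ ∀ v ∈ F, c v ∈ C)
      = if ∅ ∈ Δ then {∅} else ∅ := by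
    ext F
    split_ifs with h
    · simp only [Finset.mem_filter, Finset.card_eq_zero, Finset.mem_singleton]
      constructor
      · rintro ⟨_, h, _⟩; exact h
      · rintro rfl; simp [h]
    · simp only [Finset.mem_filter, Finset.card_eq_zero, Finset.notMem_empty, iff_false]
      rintro ⟨h1, rfl, _⟩; exact h h1
  rw [this]; split_ifs <;> simp

lemma rcnt_empty_succ {V ι : Type*} [Fintype V] (c : V → ι) (Δ : Finset (Finset V))
    (k : ℕ) : rcnt c Δ ∅ (k+1) = 0 := by
  classical
  unfold rcnt
  rw [Finset.card_eq_zero, Finset.filter_eq_empty_iff]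
  rintro F - ⟨h1, -, h2⟩
  have : F.Nonempty := by rw [← Finset.card_pos]; omega
  obtain ⟨v, hv⟩ := this
  simpa using h2 v hv

open Classical in
lemma rcnt_insert {V ι : Type*} [Fintype V] (c : V → ι) (Δ : Finset (Finset V))
    (C : Finset ι) (a : ι) (ha : a ∉ C) (k : ℕ) :
    rcnt c Δ (insert a C) (k+1) = rcnt c Δ C (k+1) +
      ∑ v ∈ Finset.univ.filter (fun v => c v = a), rcnt c (rlink Δ v) C k := by
  set P : V → Finset (Finset V) := fun v => (rlink Δ v).filter fun F : Finset V => F.card = k ∧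
    Set.InjOn c (F : Set V) ∧ ∀ v ∈ F, c v ∈ C with hP
  have hnot : ∀ v, c v = a → ∀ F ∈ P v, v ∉ F := by
    intro v hv F hF hvF
    simp only [hP, Finset.mem_filter] at hF
    exact ha (hv ▸ hF.2.2.2 v hvF)
  have key : (Δ.filter fun F : Finset V => F.card = k+1 ∧ Set.InjOn c (F : Set V) ∧ ∀ v ∈ F, c v ∈ insert a C)
      = (Δ.filter fun F : Finset V => F.card = k+1 ∧ Set.InjOn c (F : Set V) ∧ ∀ v ∈ F, c v ∈ C) ∪
        (Finset.univ.filter (fun v => c v = a)).biUnion fun v => (P v).image (insert v) := by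
    ext F
    simp only [Finset.mem_union, Finset.mem_biUnion, Finset.mem_image, Finset.mem_filter, 
      Finset.mem_univ, true_and]
    constructor
    · rintro ⟨hF, hk, hi, hc⟩
      by_cases h : ∀ v ∈ F, c v ∈ C
      · exact Or.inl ⟨hF, hk, hi, h⟩
      · push Not at h
        obtain ⟨v, hv, hvC⟩ := h
        have hva : c v = a := by
          have := hc v hv
          rw [Finset.mem_insert] at this
          tauto
        refine Or.inr ⟨v, hva, F.erase v, ?_, Finset.insert_erase hv⟩
        simp only [hP, rlink, Finset.mem_filter, Finset.mem_univ, true_and, Finset.insert_erase hv]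
        refine ⟨hF, by rw [Finset.card_erase_of_mem hv]; omega,
          hi.mono (by simp), ?_⟩
        intro w hw
        rw [Finset.mem_erase] at hw
        have := hc w hw.2
        rw [Finset.mem_insert] at this
        rcases this with h | h
        · exact absurd (hi hw.2 hv (h.trans hva.symm)) hw.1
        · exact h
    · rintro (⟨hF, hk, hi, hc⟩ | ⟨v, hva, F', hF', rfl⟩)
      · exact ⟨hF, hk, hi, fun v hv => Finset.mem_insert_of_mem (hc v hv)⟩
      · have hv := hnot v hva F' hF'
        simp only [hP, rlink, Finset.mem_filter, Finset.mem_univ, true_and] at hF'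
        obtain ⟨h1, h2, h3, h4⟩ := hF'
        refine ⟨h1, by rw [Finset.card_insert_of_notMem hv, h2], ?_, ?_⟩
        · rw [Finset.coe_insert, Set.injOn_insert (by simpa using hv)]
          refine ⟨h3, ?_⟩
          rintro ⟨w, hw, hwv⟩
          exact ha (hva ▸ hwv ▸ h4 w hw)
        · intro w hw
          rw [Finset.mem_insert] at hw ⊢
          rcases hw with rfl | hw
          · exact Or.inl hva
          · exact Or.inr (h4 w hw)
  unfold rcnt
  rw [key, Finset.card_union_of_disjoint, Finset.card_biUnion]
  · congr 1
    refine Finset.sum_congr rfl ?_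
    intro v hv
    rw [Finset.mem_filter] at hv
    apply Finset.card_image_of_injOn
    intro F hF G hG h
    have h1 := hnot v hv.2 F hF
    have h2 := hnot v hv.2 G hG
    rw [← Finset.erase_insert h1, ← Finset.erase_insert h2]
    exact congrArg (fun s => s.erase v) h
  · intro v hv w hw hvw
    rw [Finset.mem_coe, Finset.mem_filter] at hv hw
    change Disjoint _ _
    rw [Finset.disjoint_left]
    rintro F hF hG
    rw [Finset.mem_image] at hF hG
    obtain ⟨F', hF', rfl⟩ := hF
    obtain ⟨G', hG', h⟩ := hG
    have : w ∈ insert v F' := by rw [← h]; simp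
    rw [Finset.mem_insert] at this
    rcases this with h | h
    · exact hvw h.symm
    · simp only [hP, Finset.mem_filter] at hF'
      exact ha (hw.2 ▸ hF'.2.2.2 w h)
  · rw [Finset.disjoint_left]
    intro F hF hG
    simp only [Finset.mem_biUnion, Finset.mem_image, Finset.mem_filter, 
      Finset.mem_univ, true_and] at hF hG
    obtain ⟨v, hva, F', hF', rfl⟩ := hG
    exact ha (hva ▸ hF.2.2.2 v (by simp))

open Classical in
noncomputable def csize {V ι : Type*} [Fintype V] (c : V → ι) (i : ι) : ℕ :=
  (Finset.univ.filter (fun v => c v = i)).card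

lemma rcnt_mono {V ι : Type*} [Fintype V] (c : V → ι) {Δ Γ : Finset (Finset V)} (h : Δ ⊆ Γ)
    (C : Finset ι) (k : ℕ) : rcnt c Δ C k ≤ rcnt c Γ C k := by
  classical
  exact Finset.card_le_card (Finset.filter_subset_filter _ h)

lemma rcnt_univ {V ι : Type*} [Fintype V] (c : V → ι) (C : Finset ι) :
    ∀ k, (rcnt c Finset.univ C k : ℝ) = esy (fun i => (csize c i : ℝ)) C k := by
  classical
  induction C using Finset.induction_on with
  | empty =>
    intro k; cases k with
    | zero => simp [esy_zero, rcnt_zero]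
    | succ k => simp [esy_empty_succ, rcnt_empty_succ]
  | insert a C ha ih =>
    intro k; cases k with
    | zero => simp [esy_zero, rcnt_zero]
    | succ k =>
      rw [esy_insert _ C a ha, rcnt_insert c _ C a ha]
      have : ∀ v : V, rlink Finset.univ v = Finset.univ := by
        intro v; simp [rlink]
      simp only [this, Finset.sum_const, smul_eq_mul]
      push_cast
      rw [ih, ih]
      simp [csize]

lemma rcnt_le {V ι : Type*} [Fintype V] (c : V → ι) (Δ : Finset (Finset V)) (C : Finset ι) (k : ℕ) :
    (rcnt c Δ C k : ℝ) ≤ esy (fun i => (csize c i : ℝ)) C k := by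
  rw [← rcnt_univ]
  exact_mod_cast rcnt_mono c (Finset.subset_univ _) C k

lemma step_ineq (F1 F0 G1 G0 m e2 e1 e0 : ℝ) (hm : 0 ≤ m) (he1 : 0 ≤ e1) (he0 : 0 ≤ e0)
    (he2 : 0 ≤ e2)
    (hz : e1 = 0 → F0 = 0 ∧ F1 = 0 ∧ G1 = 0 ∧ G0 * e2 = 0)
    (hF : F1 * e1 ≤ F0 * e2) (hG : G1 * e0 ≤ G0 * e1) (hGF : G1 ≤ m * F0)
    (hlc : e0 * e2 ≤ e1 * e1) :
    (F1 + G1) * (e1 + m * e0) ≤ (F0 + G0) * (e2 + m * e1) := by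
  rcases he1.eq_or_lt with h | h
  · obtain ⟨a, b, c, d⟩ := hz h.symm
    rw [a, b, c, ← h]; linarith
  · have key : m * F1 * e0 + G1 * e1 ≤ G0 * e2 + m * F0 * e1 := by
      refine le_of_mul_le_mul_right ?_ h
      have h1 := mul_le_mul_of_nonneg_left hF (mul_nonneg hm he0)
      have h2 := mul_le_mul_of_nonneg_left hG he2
      have h3 := mul_nonneg (sub_nonneg.2 hGF) (sub_nonneg.2 hlc)
      nlinarith
    have h2 := mul_le_mul_of_nonneg_left hG hm
    nlinarith

lemma rcnt_main {V ι : Type*} [Fintype V] (c : V → ι) (C : Finset ι) :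
    ∀ (Δ : Finset (Finset V)), (∀ F ∈ Δ, ∀ G ⊆ F, G ∈ Δ) → ∀ k,
    (rcnt c Δ C (k+1) : ℝ) * esy (fun i => (csize c i : ℝ)) C k ≤
      rcnt c Δ C k * esy (fun i => (csize c i : ℝ)) C (k+1) := by
  classical
  have hx : ∀ i, (0:ℝ) ≤ (fun i => (csize c i : ℝ)) i := fun i => Nat.cast_nonneg _
  have hle := rcnt_le c
  generalize hxx : (fun i => (csize c i : ℝ)) = x at *
  induction C using Finset.induction_on with
  | empty =>
    intro Δ hΔ k
    simp [esy_empty_succ, rcnt_empty_succ]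
  | insert a C ha ih =>
    intro Δ hΔ k
    have hL : ∀ v, rlink Δ v ⊆ Δ := by
      intro v F hF
      simp only [rlink, Finset.mem_filter, Finset.mem_univ, true_and] at hF
      exact hΔ _ hF _ (Finset.subset_insert _ _)
    have hLd : ∀ v, ∀ F ∈ rlink Δ v, ∀ G ⊆ F, G ∈ rlink Δ v := by
      intro v F hF G hG
      simp only [rlink, Finset.mem_filter, Finset.mem_univ, true_and] at hF ⊢
      exact hΔ _ hF _ (Finset.insert_subset_insert _ hG)
    set S := Finset.univ.filter (fun v => c v = a) with hS
    have hm : x a = (S.card : ℝ) := by rw [← hxx]; simp [csize, hS]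
    set g : ℕ → ℝ := fun k => ∑ v ∈ S, (rcnt c (rlink Δ v) C k : ℝ) with hg
    have hrec : ∀ k, (rcnt c Δ (insert a C) (k+1) : ℝ) = rcnt c Δ C (k+1) + g k := by
      intro k
      rw [rcnt_insert c Δ C a ha]; push_cast; rfl
    have hgF : ∀ k, g k ≤ x a * rcnt c Δ C k := by
      intro k
      rw [hm, ← nsmul_eq_mul]
      apply Finset.sum_le_card_nsmul
      intro v _
      exact_mod_cast rcnt_mono c (hL v) C k
    have hgg : ∀ k, g (k+1) * esy x C k ≤ g k * esy x C (k+1) := by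
      intro k
      simp only [hg, Finset.sum_mul]
      exact Finset.sum_le_sum fun v _ => ih _ (hLd v) k
    have hen := esy_nonneg x hx C
    have hg0 : ∀ k, 0 ≤ g k := fun k => Finset.sum_nonneg fun v _ => Nat.cast_nonneg _
    rcases k with _ | k
    · rw [hrec, esy_insert x C a ha, esy_zero, rcnt_zero c Δ (insert a C), ← rcnt_zero c Δ C]
      have h1 := ih Δ hΔ 0
      have h2 := hgF 0
      rw [esy_zero] at h1 ⊢
      simp only [zero_add] at *
      linarith
    · rw [hrec, hrec, esy_insert x C a ha, esy_insert x C a ha]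
      apply step_ineq
      · exact hx a
      · exact hen _
      · exact hen _
      · exact hen _
      · intro h0
        have h1 := esy_zero_succ x hx C _ h0
        have hF0 : (rcnt c Δ C (k+1) : ℝ) = 0 :=
          le_antisymm (h0 ▸ hle Δ C (k+1)) (Nat.cast_nonneg _)
        have hF1 : (rcnt c Δ C (k+1+1) : ℝ) = 0 :=
          le_antisymm (h1 ▸ hle Δ C (k+1+1)) (Nat.cast_nonneg _)
        refine ⟨hF0, hF1, le_antisymm ?_ (hg0 _), by rw [h1, mul_zero]⟩
        have := hgF (k+1)
        rwa [hF0, mul_zero] at this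
      · exact ih Δ hΔ (k+1)
      · exact hgg k
      · exact hgF (k+1)
      · exact esy_lc x hx C k (k+1) (by omega)

lemma esy_congr {ι : Type*} (x y : ι → ℝ) (C : Finset ι) (h : ∀ i ∈ C, x i = y i) (k : ℕ) :
    esy x C k = esy y C k := by
  unfold esy
  rw [Finset.prod_congr rfl]
  intro i hi
  rw [h i hi]

/-- smoothing step -/
lemma esy_smooth {ι : Type*} [DecidableEq ι] (x y : ι → ℝ) (hx : ∀ i, 0 ≤ x i)
    (C : Finset ι) (a b : ι) (hab : a ≠ b) (ha : a ∉ C) (hb : b ∉ C)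
    (h : ∀ i ∈ C, y i = x i) (hs : y a + y b = x a + x b) (hp : x a * x b ≤ y a * y b) (k : ℕ) :
    esy x (insert a (insert b C)) k ≤ esy y (insert a (insert b C)) k ∧
    esy x (insert a (insert b C)) (k+1) * esy y (insert a (insert b C)) k ≤
    esy x (insert a (insert b C)) k * esy y (insert a (insert b C)) (k+1) := by
  have ha' : a ∉ insert b C := by simp [hab, ha]
  have e1 : ∀ z : ι → ℝ, esy z (insert a (insert b C)) 1 = esy z C 1 + (z a + z b) := by
    intro z
    have h1 := esy_insert z _ a ha' 0
    have h2 := esy_insert z _ b hb 0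
    simp only [esy_zero, zero_add] at h1 h2
    rw [h1, h2]; ring
  have e2 : ∀ (z : ι → ℝ) (k), esy z (insert a (insert b C)) (k+2) =
      esy z C (k+2) + (z a + z b) * esy z C (k+1) + z a * z b * esy z C k := by
    intro z k
    rw [esy_insert z _ a ha', esy_insert z _ b hb, esy_insert z _ b hb]; ring
  have hc := esy_congr y x C h
  have hn := esy_nonneg x hx C
  have hlc := esy_lc x hx C
  rcases k with _ | _ | k
  · simp [esy_zero, e1, hc, hs]
  · simp only [zero_add, e1, hc, hs, le_refl, true_and]
    have := e2 x 0
    have h2 := e2 y 0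
    simp only [zero_add, esy_zero, hc, hs] at this h2
    rw [show 1 + 1 = 2 from rfl, this, h2]
    have : 0 ≤ esy x C 1 + (x a + x b) := by
      have := hn 1; have := hx a; have := hx b; positivity
    nlinarith
  · rw [show k + 1 + 1 + 1 = (k+1) + 2 from rfl, show k+1+1 = k+2 from rfl, e2, e2, e2, e2]
    simp only [hc, hs]
    refine ⟨?_, ?_⟩
    · have := mul_le_mul_of_nonneg_right hp (hn k)
      linarith
    · have h1 := hlc k (k+1) (by omega)
      have h2 := hlc k (k+2) (by omega)
      have hs0 : 0 ≤ x a + x b := add_nonneg (hx a) (hx b)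
      have h3 := mul_le_mul_of_nonneg_left h1 hs0
      rw [show k + 1 + 1 = k + 2 from rfl] at *
      rw [show k + 2 + 1 = k + 1 + 2 from rfl] at *
      have h4 : 0 ≤ esy x C (k+1) * (esy x C (k+2) + (x a + x b) * esy x C (k+1)) -
        esy x C k * (esy x C (k+1+2) + (x a + x b) * esy x C (k+2)) := by linarith
      have h5 := mul_nonneg (sub_nonneg.2 hp) h4
      rw [show k + 1 + 1 = k + 2 from rfl] at *
      linarith

/-- balanced vectors all have the same product -/
lemma balanced_prod {r : ℕ} (hr : 0 < r) {R : Type*} [CommMonoid R] (φ : ℕ → R) (x : Fin r → ℕ)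
    (hb : ∀ i j, x i ≤ x j + 1) :
    ∏ i, φ (x i) = φ ((∑ i, x i) / r + 1) ^ ((∑ i, x i) % r) *
      φ ((∑ i, x i) / r) ^ (r - (∑ i, x i) % r) := by
  haveI : Nonempty (Fin r) := ⟨⟨0, hr⟩⟩
  obtain ⟨i0, hi0⟩ := Finite.exists_min x
  set q := x i0
  set S := Finset.univ.filter (fun i => x i = q + 1) with hS
  have hx : ∀ i, x i = if x i = q + 1 then q + 1 else q := by
    intro i; have := hi0 i; have := hb i i0; split_ifs <;> omega
  have hlt : S.card < r := by
    have : S ⊂ Finset.univ := by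
      rw [Finset.ssubset_univ_iff]
      intro h
      have : i0 ∈ S := h ▸ Finset.mem_univ _
      simp only [hS, Finset.mem_filter, Finset.mem_univ, true_and] at this
      omega
    simpa using Finset.card_lt_card this
  have hcompl : (Finset.univ.filter (fun i => ¬ x i = q + 1)).card = r - S.card := by
    have := Finset.card_filter_add_card_filter_not (s := (Finset.univ : Finset (Fin r))) (fun i => x i = q + 1)
    simp only [Finset.card_univ, Fintype.card_fin] at this
    rw [← hS] at this
    omega
  have hsum : ∑ i, x i = S.card + r * q := by
    have : ∀ i, x i = (if x i = q + 1 then 1 else 0) + q := by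
      intro i; have := hx i; split_ifs at * <;> omega
    rw [Finset.sum_congr rfl (fun i _ => this i), Finset.sum_add_distrib]
    simp [hS]
  have hmod : (∑ i, x i) % r = S.card := by
    rw [hsum, Nat.add_mul_mod_self_left, Nat.mod_eq_of_lt hlt]
  have hdiv : (∑ i, x i) / r = q := by
    rw [hsum, Nat.add_mul_div_left _ _ hr, Nat.div_eq_of_lt hlt, zero_add]
  rw [hmod, hdiv]
  have : ∀ i, φ (x i) = if x i = q + 1 then φ (q + 1) else φ q := by
    intro i; have := hx i; split_ifs at * with h
    · rw [h]
    · rw [this]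
  rw [Finset.prod_congr rfl (fun i _ => this i), Finset.prod_ite, Finset.prod_const,
    Finset.prod_const, hcompl]

lemma smooth_to_balanced {r : ℕ} (hr : 0 < r) (y : Fin r → ℕ) (hy : ∀ i j, y i ≤ y j + 1)
    (k : ℕ) (f0 f1 : ℝ) (h0 : 0 ≤ f0) (h1 : 0 ≤ f1) : ∀ (N : ℕ) (x : Fin r → ℕ), ∑ i, (x i)^2 = N →
    ∑ i, x i = ∑ i, y i →
    f0 ≤ esy (fun i => (x i : ℝ)) Finset.univ k → f1 ≤ esy (fun i => (x i : ℝ)) Finset.univ (k+1) →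
    f1 * esy (fun i => (x i : ℝ)) Finset.univ k ≤ f0 * esy (fun i => (x i : ℝ)) Finset.univ (k+1) →
    f0 ≤ esy (fun i => (y i : ℝ)) Finset.univ k ∧
    f1 * esy (fun i => (y i : ℝ)) Finset.univ k ≤ f0 * esy (fun i => (y i : ℝ)) Finset.univ (k+1) := by
  intro N
  induction N using Nat.strong_induction_on with
  | _ N ih =>
  intro x hN hsum hf0 hf1 hf
  by_cases hb : ∀ i j, x i ≤ x j + 1
  · have : ∀ k, esy (fun i => (x i : ℝ)) Finset.univ k = esy (fun i => (y i : ℝ)) Finset.univ k := by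
      intro k
      unfold esy
      rw [balanced_prod hr (fun m : ℕ => (1 + Polynomial.C (m:ℝ) * Polynomial.X)) x hb,
        balanced_prod hr (fun m : ℕ => (1 + Polynomial.C (m:ℝ) * Polynomial.X)) y hy, hsum]
    rw [← this, ← this]
    exact ⟨hf0, hf⟩
  · push Not at hb
    obtain ⟨a, b, hlt⟩ := hb
    have hab : a ≠ b := by rintro rfl; omega
    set C : Finset (Fin r) := (Finset.univ.erase a).erase b with hC
    have hbm : b ∈ Finset.univ.erase a := by simp [hab.symm]
    have huniv : (Finset.univ : Finset (Fin r)) = insert a (insert b C) := by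
      rw [hC, Finset.insert_erase hbm, Finset.insert_erase (Finset.mem_univ a)]
    have haC : a ∉ C := by simp [hC]
    have hbC : b ∉ C := by simp [hC]
    have haC' : a ∉ insert b C := by simp [hC, hab]
    set z : Fin r → ℕ := fun i => if i = a then x a - 1 else if i = b then x b + 1 else x i with hz
    have za : z a = x a - 1 := by simp [hz]
    have zb : z b = x b + 1 := by simp [hz, hab.symm]
    have zC : ∀ i ∈ C, z i = x i := by
      intro i hi
      have h1 : i ≠ a := by rintro rfl; exact haC hi
      have h2 : i ≠ b := by rintro rfl; exact hbC hi
      simp [hz, h1, h2]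
    obtain ⟨d, hd⟩ : ∃ d, x a = x b + 2 + d := ⟨x a - x b - 2, by omega⟩
    have zaR : (z a : ℝ) = x b + 1 + d := by
      have : z a = x b + 1 + d := by omega
      rw [this]; push_cast; ring
    have zbR : (z b : ℝ) = x b + 1 := by rw [zb]; push_cast; ring
    have xaR : (x a : ℝ) = x b + 2 + d := by rw [hd]; push_cast; ring
    have hsm := fun k => esy_smooth (fun i => (x i : ℝ)) (fun i => (z i : ℝ))
      (fun i => Nat.cast_nonneg _) C a b hab haC hbC (fun i hi => by simp [zC i hi])
      (by simp only [zaR, zbR, xaR]; ring)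
      (by simp only [zaR, zbR, xaR]; nlinarith [(Nat.cast_nonneg d : (0:ℝ) ≤ d)]) k
    rw [← huniv] at hsm
    have hxn := esy_nonneg (fun i => (x i : ℝ)) (fun i => Nat.cast_nonneg _) Finset.univ
    have hzn := esy_nonneg (fun i => (z i : ℝ)) (fun i => Nat.cast_nonneg _) Finset.univ
    refine ih (∑ i, (z i)^2) ?_ z rfl ?_ (hf0.trans (hsm k).1) (hf1.trans (hsm (k+1)).1) ?_
    · rw [← hN, huniv, Finset.sum_insert haC', Finset.sum_insert hbC, Finset.sum_insert haC',
        Finset.sum_insert hbC, Finset.sum_congr rfl (fun i hi => by rw [zC i hi])]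
      have : z a = x b + 1 + d := by omega
      rw [this, zb, hd]
      nlinarith
    · rw [← hsum, huniv, Finset.sum_insert haC', Finset.sum_insert hbC, Finset.sum_insert haC',
        Finset.sum_insert hbC, Finset.sum_congr rfl zC]
      change z a + (z b + C.sum x) = x a + (x b + C.sum x)
      omega
    · rcases (hxn k).eq_or_lt with h | h
      · have h2 := esy_zero_succ (fun i => (x i : ℝ)) (fun i => Nat.cast_nonneg _) Finset.univ k h.symm
        have h3 : f1 = 0 := le_antisymm (h2 ▸ hf1) h1
        rw [h3, zero_mul]
        exact mul_nonneg h0 (hzn _)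
      · refine le_of_mul_le_mul_right ?_ h
        have h2 := mul_le_mul_of_nonneg_right hf (hzn k)
        have h3 := mul_le_mul_of_nonneg_left (hsm k).2 h0
        nlinarith

/-- convexity part -/
lemma mem_hull_of_ratio {n : ℕ} (hn : 0 < n) (f g : ℕ → ℝ) (hf : ∀ k, 0 ≤ f k)
    (hg : ∀ k, 0 ≤ g k) (hg1 : 0 < g 1) (hfg1 : f 1 = g 1) (hfg : ∀ k, f k ≤ g k)
    (hgz : ∀ k, g k = 0 → g (k+1) = 0)
    (h : ∀ k, f (k+1) * g k ≤ f k * g (k+1)) :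
    (fun i : Fin n => f ((i:ℕ)+1)) ∈ convexHull ℝ
        {x : Fin n → ℝ | ∃ k, 1 ≤ k ∧ k ≤ n ∧
          x = trunc (fun i : Fin n => g ((i : ℕ) + 1)) k} := by
  set q : ℕ → ℝ := fun k => if k ≤ n then f k / g k else 0 with hq
  have hq0 : ∀ k, 0 ≤ q k := by
    intro k; simp only [hq]; split_ifs
    · exact div_nonneg (hf k) (hg k)
    · exact le_rfl
  have hanti : ∀ k, q (k+1) ≤ q k := by
    intro k
    by_cases hk : k + 1 ≤ n
    · have hk' : k ≤ n := by omega
      rcases (hg (k+1)).eq_or_lt with h0 | h0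
      · have : q (k+1) = 0 := by simp [hq, ← h0]
        rw [this]; exact hq0 k
      · have hk0 : 0 < g k := by
          rcases (hg k).eq_or_lt with h1 | h1
          · exact absurd (hgz k h1.symm) h0.ne'
          · exact h1
        simp only [hq, hk, hk', if_true]
        rw [div_le_div_iff₀ h0 hk0]
        exact h k
    · have : q (k+1) = 0 := by simp [hq, hk]
      rw [this]; exact hq0 k
  have htel : ∀ a b, a ≤ b → ∑ k ∈ Finset.Ico a b, (q k - q (k+1)) = q a - q b := by
    intro a b hab
    induction b, hab using Nat.le_induction with
    | base => simp
    | succ b hb ih => rw [Finset.sum_Ico_succ_top hb, ih]; ring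
  have hqn : q (n+1) = 0 := by simp [hq]
  have hq1 : q 1 = 1 := by
    have : 1 ≤ n := hn
    simp only [hq, this, if_true, hfg1]; exact div_self hg1.ne'
  have hmem := (convex_convexHull ℝ {x : Fin n → ℝ | ∃ k, 1 ≤ k ∧ k ≤ n ∧
          x = trunc (fun i : Fin n => g ((i : ℕ) + 1)) k}).sum_mem
    (t := Finset.Ico 1 (n+1)) (w := fun k => q k - q (k+1))
    (z := fun k => trunc (fun i : Fin n => g ((i : ℕ) + 1)) k)
    (fun k _ => sub_nonneg.2 (hanti k))
    (by rw [htel 1 (n+1) (by omega), hqn, hq1, sub_zero])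
    (fun k hk => subset_convexHull ℝ _ (by
      rw [Finset.mem_Ico] at hk
      exact ⟨k, hk.1, by omega, rfl⟩))
  convert hmem using 1
  ext i
  rw [Finset.sum_apply]
  have hi := i.2
  rw [← Finset.sum_Ico_consecutive _ (show 1 ≤ (i:ℕ)+1 by omega) (show (i:ℕ)+1 ≤ n+1 by omega)]
  have z1 : ∑ k ∈ Finset.Ico 1 ((i:ℕ)+1), ((q k - q (k+1)) • trunc (fun i : Fin n => g ((i : ℕ) + 1)) k) i = 0 := by
    apply Finset.sum_eq_zero
    intro k hk
    rw [Finset.mem_Ico] at hk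
    have : ¬ ((i:ℕ) + 1 ≤ k) := by omega
    simp [trunc, this]
  have z2 : ∑ k ∈ Finset.Ico ((i:ℕ)+1) (n+1), ((q k - q (k+1)) • trunc (fun i : Fin n => g ((i : ℕ) + 1)) k) i
      = ∑ k ∈ Finset.Ico ((i:ℕ)+1) (n+1), (q k - q (k+1)) * g ((i:ℕ)+1) := by
    apply Finset.sum_congr rfl
    intro k hk
    rw [Finset.mem_Ico] at hk
    simp [trunc, hk.1]
  rw [z1, z2, ← Finset.sum_mul, htel _ _ (by omega), hqn, zero_add, sub_zero]
  have : (i:ℕ)+1 ≤ n := by omega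
  simp only [hq, this, if_true]
  rcases (hg ((i:ℕ)+1)).eq_or_lt with h0 | h0
  · have h1 := hfg ((i:ℕ)+1)
    have h2 := hf ((i:ℕ)+1)
    rw [← h0] at h1 ⊢
    rw [mul_zero]; linarith
  · rw [div_mul_cancel₀ _ h0.ne']

def tcol (n r : ℕ) (hr : 0 < r) (v : Fin n) : Fin r := ⟨(v:ℕ) % r, Nat.mod_lt _ hr⟩

lemma turan_clique_iff (n r : ℕ) (hr : 0 < r) (k : ℕ) (s : Finset (Fin n)) :
    (SimpleGraph.turanGraph n r).IsNClique k s ↔ s.card = k ∧ Set.InjOn (tcol n r hr) (s : Set (Fin n)) := by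
  rw [SimpleGraph.isNClique_iff, and_comm, SimpleGraph.isClique_iff]
  refine and_congr_right fun _ => ?_
  constructor
  · intro h x hx y hy hxy
    by_contra hne
    exact h hx hy hne (by simpa [tcol] using hxy)
  · intro h x hx y hy hne hxy
    exact hne (h hx hy (by simpa [tcol] using hxy))

lemma turanCount_eq (n r : ℕ) (hr : 0 < r) (k : ℕ) :
    turanCount n r k = rcnt (tcol n r hr) Finset.univ Finset.univ k := by
  classical
  unfold turanCount cliqueCount rcnt
  rw [← Set.ncard_coe_finset]
  congr 1
  ext s
  simp [turan_clique_iff n r hr]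

lemma csize_sum {n r : ℕ} (c : Fin n → Fin r) : ∑ i, csize c i = n := by
  classical
  unfold csize
  have := Finset.card_eq_sum_card_fiberwise (s := (Finset.univ : Finset (Fin n)))
    (t := (Finset.univ : Finset (Fin r))) (f := c) (by intro x _; simp)
  simp only [Finset.card_univ, Fintype.card_fin] at this
  exact (this.trans (Finset.sum_congr rfl fun i _ => by congr)).symm

lemma csize_tcol (n r : ℕ) (hr : 0 < r) (i : Fin r) :
    csize (tcol n r hr) i = n.count (fun v => v ≡ i [MOD r]) := by
  classical
  unfold csize
  rw [Nat.count_eq_card_filter_range, ← Finset.card_map Fin.valEmbedding]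
  congr 1
  ext v
  simp only [Finset.mem_map, Finset.mem_filter, Finset.mem_univ, true_and, Finset.mem_range,
    Fin.valEmbedding_apply, tcol, Fin.ext_iff, Nat.ModEq, Nat.mod_eq_of_lt i.2]
  constructor
  · rintro ⟨w, h, rfl⟩; exact ⟨w.2, h⟩
  · rintro ⟨h1, h2⟩; exact ⟨⟨v, h1⟩, h2, rfl⟩

lemma csize_tcol_balanced (n r : ℕ) (hr : 0 < r) (i j : Fin r) :
    csize (tcol n r hr) i ≤ csize (tcol n r hr) j + 1 := by
  rw [csize_tcol, csize_tcol, Nat.count_modEq_card _ hr, Nat.count_modEq_card _ hr]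
  split_ifs <;> omega

lemma faceCount_eq {n r : ℕ} (Δ : Finset (Finset (Fin n))) (hΔ : IsComplex Δ)
    (c : (underlyingGraph Δ).Coloring (Fin r)) (k : ℕ) :
    faceCount Δ k = rcnt c Δ Finset.univ k := by
  classical
  unfold faceCount rcnt
  congr 1
  ext F
  simp only [Finset.mem_filter, Finset.mem_univ, implies_true, and_true]
  refine and_congr_right fun hF => ?_
  refine ⟨fun h => ⟨h, ?_⟩, fun h => h.1⟩
  intro x hx y hy hxy
  by_contra hne
  refine c.valid (v := x) (w := y) ⟨hne, hΔ.1 F hF _ ?_⟩ hxy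
  intro z hz
  simp only [Finset.mem_insert, Finset.mem_singleton] at hz
  rcases hz with rfl | rfl
  · exact hx
  · exact hy

lemma faceCount_one {n : ℕ} (Δ : Finset (Finset (Fin n))) (hΔ : IsComplex Δ) :
    faceCount Δ 1 = n := by
  classical
  unfold faceCount
  have : Δ.filter (fun F => F.card = 1) = Finset.univ.map ⟨fun v : Fin n => ({v} : Finset (Fin n)), Finset.singleton_injective⟩ := by
    ext F
    simp only [Finset.mem_filter, Finset.card_eq_one, Finset.mem_map, Finset.mem_univ, true_and,
      Function.Embedding.coeFn_mk]
    constructor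
    · rintro ⟨_, v, rfl⟩; exact ⟨v, rfl⟩
    · rintro ⟨v, rfl⟩; exact ⟨hΔ.2 v, v, rfl⟩
  rw [this]; simp

open Classical in
noncomputable def tcx (n r : ℕ) (hr : 0 < r) (k : ℕ) : Finset (Finset (Fin n)) :=
  Finset.univ.filter fun F : Finset (Fin n) => F.card ≤ k ∧ Set.InjOn (tcol n r hr) (F : Set (Fin n))

lemma tcx_complex (n r : ℕ) (hr : 0 < r) (k : ℕ) (hk : 1 ≤ k) : IsComplex (tcx n r hr k) := by
  classical
  refine ⟨?_, ?_⟩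
  · intro F hF G hG
    simp only [tcx, Finset.mem_filter, Finset.mem_univ, true_and] at hF ⊢
    exact ⟨(Finset.card_le_card hG).trans hF.1, hF.2.mono (by exact_mod_cast hG)⟩
  · intro v
    simp [tcx, hk]

lemma tcx_colorable (n r : ℕ) (hr : 0 < r) (k : ℕ) : (underlyingGraph (tcx n r hr k)).Colorable r := by
  classical
  refine ⟨SimpleGraph.Coloring.mk (tcol n r hr) ?_⟩
  rintro v w ⟨hne, h⟩ hc
  simp only [tcx, Finset.mem_filter, Finset.mem_univ, true_and] at h
  exact hne (h.2 (by simp) (by simp) hc)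

lemma tcx_faceCount (n r : ℕ) (hr : 0 < r) (k j : ℕ) :
    faceCount (tcx n r hr k) j = if j ≤ k then turanCount n r j else 0 := by
  classical
  rw [turanCount_eq n r hr]
  unfold faceCount rcnt tcx
  rw [Finset.filter_filter]
  split_ifs with h
  · congr 1
    ext F
    simp only [Finset.mem_filter, Finset.mem_univ, implies_true, and_true, true_and]
    constructor
    · rintro ⟨⟨_, h2⟩, h3⟩; exact ⟨h3, h2⟩
    · rintro ⟨h3, h2⟩; exact ⟨⟨by omega, h2⟩, h3⟩
  · rw [Finset.card_eq_zero, Finset.filter_eq_empty_iff]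
    rintro F - ⟨⟨h1, -⟩, h2⟩
    omega

/-- **Kozlov's conjecture** (main theorem): the convex hull of the set of `f`-vectors
`(f_1(Δ), …, f_n(Δ))` of `r`-colorable simplicial complexes `Δ` on `n` vertices equals
the convex hull of the truncations `g^1, …, g^n` of the clique vector
`g = (t_1(n,r), …, t_n(n,r))` of the Turán graph `T(n,r)`. -/
theorem convexHull_faceVectors_colorable_eq_convexHull_truncations
    (n r : ℕ) (hn : 0 < n) (hr : 0 < r) :
    convexHull ℝ
        {x : Fin n → ℝ | ∃ Δ : Finset (Finset (Fin n)), IsComplex Δ ∧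
          (underlyingGraph Δ).Colorable r ∧
          x = fun i : Fin n => (faceCount Δ ((i : ℕ) + 1) : ℝ)} =
      convexHull ℝ
        {x : Fin n → ℝ | ∃ k, 1 ≤ k ∧ k ≤ n ∧
          x = trunc (fun i : Fin n => (turanCount n r ((i : ℕ) + 1) : ℝ)) k} := by
  apply Set.Subset.antisymm
  · apply convexHull_min _ (convex_convexHull ℝ _)
    rintro x ⟨Δ, hΔ, ⟨c⟩, rfl⟩
    have hT : ∀ k, (turanCount n r k : ℝ) =
        esy (fun i => (csize (tcol n r hr) i : ℝ)) Finset.univ k := by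
      intro k; rw [turanCount_eq n r hr, rcnt_univ]
    have hmain : ∀ k, (faceCount Δ k : ℝ) ≤ turanCount n r k ∧
        (faceCount Δ (k+1) : ℝ) * turanCount n r k ≤ faceCount Δ k * turanCount n r (k+1) := by
      intro k
      rw [hT, hT, faceCount_eq Δ hΔ c, faceCount_eq Δ hΔ c]
      exact smooth_to_balanced hr (csize (tcol n r hr)) (csize_tcol_balanced n r hr) k _ _
        (Nat.cast_nonneg _) (Nat.cast_nonneg _) _ (csize c) rfl
        (by rw [csize_sum, csize_sum]) (rcnt_le _ _ _ _) (rcnt_le _ _ _ _)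
        (rcnt_main c Finset.univ Δ hΔ.1 k)
    have ht1 : turanCount n r 1 = n := by
      have h1 := tcx_faceCount n r hr 1 1
      rw [if_pos le_rfl, faceCount_one _ (tcx_complex n r hr 1 le_rfl)] at h1
      exact h1.symm
    refine mem_hull_of_ratio hn (fun k => (faceCount Δ k : ℝ)) (fun k => (turanCount n r k : ℝ))
      (fun k => Nat.cast_nonneg _) (fun k => Nat.cast_nonneg _) ?_ ?_ (fun k => (hmain k).1) ?_
      (fun k => (hmain k).2)
    · simp only [ht1]; exact_mod_cast hn
    · simp only [ht1, faceCount_one Δ hΔ]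
    · intro k h
      simp only [hT] at h ⊢
      exact esy_zero_succ _ (fun i => Nat.cast_nonneg _) _ k h
  · apply convexHull_mono
    rintro x ⟨k, hk, hkn, rfl⟩
    refine ⟨tcx n r hr k, tcx_complex n r hr k hk, tcx_colorable n r hr k, ?_⟩
    ext i
    rw [tcx_faceCount]
    simp only [trunc]
    split_ifs <;> simp
end

section
/- (Zykov's theorem) Let n and r be positive integers and let G be a finite simple graph on n vertices whose clique number is at most r. Then for every k ≥ 1, the number of k-cliques of G is at most the number of k-cliques of the Turán graph T(n,r): c_k(G) ≤ t_k(n,r). -/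
open Multiset in
lemma zk_esymm_cons (a : ℕ) (s : Multiset ℕ) (k : ℕ) :
    (a ::ₘ s).esymm (k+1) = s.esymm (k+1) + a * s.esymm k := by
  simp [Multiset.esymm, Multiset.powersetCard_cons, Multiset.map_map,
    Multiset.sum_map_mul_left]

lemma zk_esymm_zero (s : Multiset ℕ) : s.esymm 0 = 1 := by
  simp [Multiset.esymm]

lemma zk_smooth (x y : ℕ) (s : Multiset ℕ) (h : x + 2 ≤ y) (k : ℕ) :
    (x ::ₘ y ::ₘ s).esymm k ≤ ((x+1) ::ₘ (y-1) ::ₘ s).esymm k := by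
  obtain ⟨d, rfl⟩ := Nat.exists_eq_add_of_le h
  have e : x + 2 + d - 1 = x + 1 + d := by omega
  rw [e]
  rcases k with _ | _ | k
  · simp [zk_esymm_zero]
  · simp only [zk_esymm_cons, zk_esymm_zero]; linarith
  · simp only [zk_esymm_cons]
    nlinarith [Nat.zero_le ((d+1) * s.esymm k)]

/-- balanced multiset -/
def zkB (n r : ℕ) : Multiset ℕ :=
  Multiset.replicate (r - n % r) (n / r) + Multiset.replicate (n % r) (n / r + 1)

lemma zk_two_val (q : ℕ) (s : Multiset ℕ) (h : ∀ x ∈ s, x = q ∨ x = q + 1) :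
    ∃ b, b ≤ s.card ∧ s = Multiset.replicate (s.card - b) q + Multiset.replicate b (q+1)
      ∧ s.sum = q * s.card + b := by
  induction s using Multiset.induction_on with
  | empty => exact ⟨0, by simp⟩
  | cons a s ih =>
    obtain ⟨b, hb, hs, hsum⟩ := ih (fun x hx => h x (Multiset.mem_cons_of_mem hx))
    rcases h a (Multiset.mem_cons_self a s) with rfl | rfl
    · refine ⟨b, by simp; omega, ?_, by simp [hsum]; ring⟩
      rw [Multiset.card_cons, Nat.sub_add_comm hb, Multiset.replicate_succ, Multiset.cons_add, ← hs]
    · refine ⟨b+1, by simp; omega, ?_, by simp [hsum]; ring⟩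
      rw [Multiset.card_cons, Nat.add_sub_add_right, Multiset.replicate_succ, Multiset.add_cons, ← hs]

lemma zk_unique (s : Multiset ℕ) (h : ∀ x ∈ s, ∀ y ∈ s, y ≤ x + 1) :
    s = zkB s.sum s.card := by
  rcases s.empty_or_exists_mem with rfl | ⟨a, ha⟩
  · simp [zkB]
  have hne : ∃ x, x ∈ s := ⟨a, ha⟩
  classical
  have hq := Nat.find_spec hne
  have hmin : ∀ x ∈ s, Nat.find hne ≤ x := fun x hx => Nat.find_min' hne hx
  set q := Nat.find hne with hqd
  obtain ⟨b, hb, hs, hsum⟩ := zk_two_val q s (fun x hx => by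
    have := hmin x hx; have := h q hq x hx; omega)
  have hlt : b < s.card := by
    rcases hb.lt_or_eq with h1 | h1
    · exact h1
    · exfalso
      rw [hs, h1] at hq
      simp at hq
      have := Multiset.eq_of_mem_replicate hq
      omega
  have h1 : s.sum / s.card = q := by
    rw [hsum, mul_comm, Nat.mul_add_div (by omega), Nat.div_eq_of_lt hlt, add_zero]
  have h2 : s.sum % s.card = b := by
    rw [hsum, mul_comm, Nat.mul_add_mod, Nat.mod_eq_of_lt hlt]
  unfold zkB
  rw [h1, h2]
  exact hs

lemma zk_opt (s : Multiset ℕ) (k : ℕ) : s.esymm k ≤ (zkB s.sum s.card).esymm k := by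
  induction hN : (s.map (fun x => x^2)).sum using Nat.strong_induction_on generalizing s with
  | _ N ih =>
  by_cases h : ∀ x ∈ s, ∀ y ∈ s, y ≤ x + 1
  · rw [← zk_unique s h]
  · push Not at h
    obtain ⟨x, hx, y, hy, hxy⟩ := h
    obtain ⟨t, rfl⟩ := Multiset.exists_cons_of_mem hx
    have hy' : y ∈ t := by
      rcases Multiset.mem_cons.1 hy with h | h
      · omega
      · exact h
    obtain ⟨u, rfl⟩ := Multiset.exists_cons_of_mem hy'
    refine (zk_smooth x y u (by omega) k).trans ?_
    obtain ⟨d, rfl⟩ := Nat.exists_eq_add_of_lt hxy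
    have e : x + 1 + d + 1 - 1 = x + 1 + d := by omega
    rw [e]
    have := ih _ ?_ ((x+1) ::ₘ (x+1+d) ::ₘ u) rfl
    · have e1 : (x ::ₘ (x+1+d+1) ::ₘ u).sum = ((x+1) ::ₘ (x+1+d) ::ₘ u).sum := by
        simp only [Multiset.sum_cons]; ring
      have e2 : (x ::ₘ (x+1+d+1) ::ₘ u).card = ((x+1) ::ₘ (x+1+d) ::ₘ u).card := by
        simp only [Multiset.card_cons]
      rw [e1, e2]; exact this
    · rw [← hN]; simp; nlinarith

open Classical in
/-- cliques inside a set -/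
noncomputable def zkC {V : Type*} (G : SimpleGraph V) (A : Finset V) (k : ℕ) : Finset (Finset V) :=
  (A.powersetCard k).filter (fun s => G.IsClique s)

open Classical in
lemma zk_main {V : Type*} (G : SimpleGraph V) (r : ℕ) : ∀ (A : Finset V),
    zkC G A (r+1) = ∅ → ∀ k, (zkC G A k).card ≤ (zkB A.card r).esymm k := by
  have h0 : ∀ A, (zkC G A 0).card ≤ 1 := fun A =>
    (Finset.card_filter_le _ _).trans (by simp)
  have hE : ∀ k, (zkC G ∅ (k+1)).card = 0 := fun k => by
    simp [zkC]
  induction r with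
  | zero =>
    intro A hA k
    have hA0 : A = ∅ := by
      by_contra hne
      obtain ⟨a, ha⟩ := Finset.nonempty_iff_ne_empty.2 hne
      have : ({a} : Finset V) ∈ zkC G A (0+1) := by simp [zkC, ha]
      simp [hA] at this
    subst hA0
    cases k with
    | zero => rw [zk_esymm_zero]; exact h0 _
    | succ k => rw [hE]; simp
  | succ r ih =>
    intro A hA k
    cases k with
    | zero => rw [zk_esymm_zero]; exact h0 _
    | succ k =>
    rcases A.eq_empty_or_nonempty with rfl | hne
    · rw [hE]; simp
    let N : V → Finset V := fun u => A.filter (G.Adj u)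
    obtain ⟨v, hv, hmax⟩ := Finset.exists_max_image A (fun u => (zkC G (N u) k).card) hne
    have hsub : N v ⊆ A := Finset.filter_subset _ _
    have hfree : zkC G (N v) (r+1) = ∅ := by
      by_contra hh
      obtain ⟨s, hs⟩ := Finset.nonempty_iff_ne_empty.2 hh
      simp only [zkC, Finset.mem_filter, Finset.mem_powersetCard] at hs
      obtain ⟨⟨hsN, hsc⟩, hcl⟩ := hs
      have hvs : v ∉ s := fun h => by
        have := hsN h
        simp [N] at this
      have : insert v s ∈ zkC G A (r+1+1) := by
        simp only [zkC, Finset.mem_filter, Finset.mem_powersetCard]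
        refine ⟨⟨Finset.insert_subset hv (hsN.trans hsub), by
          rw [Finset.card_insert_of_notMem hvs, hsc]⟩, ?_⟩
        rw [Finset.coe_insert]
        exact hcl.insert (fun b hb _ => (Finset.mem_filter.1 (hsN hb)).2)
      simp [hA] at this
    have hcov : zkC G A (k+1) ⊆ zkC G (N v) (k+1) ∪
        (A \ N v).biUnion (fun u => (zkC G (N u) k).image (insert u)) := by
      intro s hs
      simp only [zkC, Finset.mem_filter, Finset.mem_powersetCard] at hs
      obtain ⟨⟨hsA, hsc⟩, hcl⟩ := hs
      rw [Finset.mem_union]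
      by_cases hsN : s ⊆ N v
      · left
        simp only [zkC, Finset.mem_filter, Finset.mem_powersetCard]
        exact ⟨⟨hsN, hsc⟩, hcl⟩
      · right
        obtain ⟨u, hus, huN⟩ := Finset.not_subset.1 hsN
        rw [Finset.mem_biUnion]
        refine ⟨u, by simp [hsA hus, huN], ?_⟩
        rw [Finset.mem_image]
        refine ⟨s.erase u, ?_, Finset.insert_erase hus⟩
        simp only [zkC, Finset.mem_filter, Finset.mem_powersetCard]
        refine ⟨⟨?_, by rw [Finset.card_erase_of_mem hus, hsc]; rfl⟩, ?_⟩
        · intro w hw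
          rw [Finset.mem_erase] at hw
          exact Finset.mem_filter.2 ⟨hsA hw.2, hcl hus hw.2 (Ne.symm hw.1)⟩
        · exact hcl.subset (by simp)
    have hcount : (zkC G A (k+1)).card ≤
        (zkC G (N v) (k+1)).card + (A \ N v).card * (zkC G (N v) k).card := by
      refine (Finset.card_le_card hcov).trans ((Finset.card_union_le _ _).trans ?_)
      gcongr
      refine Finset.card_biUnion_le_card_mul _ _ _ (fun u hu => ?_)
      exact Finset.card_image_le.trans (hmax u (Finset.mem_sdiff.1 hu).1)
    have i1 := ih (N v) hfree (k+1)
    have i2 := ih (N v) hfree k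
    have hB : ∀ n, (r ≠ 0 ∨ n = 0) → (zkB n r).card = r ∧ (zkB n r).sum = n := by
      intro n hn
      rcases Nat.eq_zero_or_pos r with rfl | hr
      · have : n = 0 := by simpa using hn
        subst this; simp [zkB]
      have := Nat.mod_lt n hr
      have h3 := Nat.div_add_mod n r
      refine ⟨by simp [zkB]; omega, ?_⟩
      simp only [zkB, Multiset.sum_add, Multiset.sum_replicate, smul_eq_mul]
      obtain ⟨c, hc⟩ := Nat.exists_eq_add_of_le this.le
      have : r - n % r = c := by omega
      rw [this]
      nlinarith
    have hr0 : r ≠ 0 ∨ (N v).card = 0 := by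
      by_cases h : r = 0
      · right
        subst h
        rw [Finset.card_eq_zero]
        by_contra hne
        obtain ⟨a, ha⟩ := Finset.nonempty_iff_ne_empty.2 hne
        have : ({a} : Finset V) ∈ zkC G (N v) (0+1) := by simp [zkC, ha]
        simp [hfree] at this
      · exact Or.inl h
    obtain ⟨b1, b2⟩ := hB _ hr0
    have := zk_opt ((A \ N v).card ::ₘ zkB (N v).card r) (k+1)
    rw [Multiset.sum_cons, Multiset.card_cons, b1, b2,
      Finset.card_sdiff_add_card_eq_card hsub, zk_esymm_cons] at this
    refine hcount.trans (le_trans ?_ this)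
    gcongr

open Classical in
lemma zk_turan (n r k : ℕ) (hr : 0 < r) : (zkB n r).esymm k ≤ turanCount n r k := by
  let cl : ℕ → Finset (Fin n) := fun i => Finset.univ.filter (fun x => x.val % r = i)
  let s : Multiset ℕ := (Finset.range r).val.map (fun i => (cl i).card)
  have hcard : s.card = r := by simp [s]
  have hsum : s.sum = n := by
    have := Finset.card_eq_sum_card_fiberwise (s := (Finset.univ : Finset (Fin n)))
      (t := Finset.range r) (f := fun x => x.val % r)
      (fun x _ => by simpa using Nat.mod_lt _ hr)
    rw [Finset.card_univ, Fintype.card_fin] at this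
    exact this.symm
  have hcl : ∀ i < r, (cl i).card = n / r + if i < n % r then 1 else 0 := by
    intro i hi
    have h := Nat.count_modEq_card n hr i
    rw [Nat.mod_eq_of_lt hi] at h
    rw [← h, Nat.count_eq_card_filter_range]
    refine Finset.card_bij (fun x _ => x.val) ?_ ?_ ?_
    · intro x hx
      simp only [cl, Finset.mem_filter, Finset.mem_univ, true_and] at hx
      simp [Nat.ModEq, hx, Nat.mod_eq_of_lt hi]
    · intro x _ y _ hxy
      exact Fin.ext hxy
    · intro x hx
      simp only [Finset.mem_filter, Finset.mem_range, Nat.ModEq, Nat.mod_eq_of_lt hi] at hx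
      exact ⟨⟨x, hx.1⟩, by simp [cl, hx.2], rfl⟩
  have hbal : ∀ x ∈ s, ∀ y ∈ s, y ≤ x + 1 := by
    intro x hx y hy
    simp only [s, Multiset.mem_map, Finset.mem_val, Finset.mem_range] at hx hy
    obtain ⟨i, hi, rfl⟩ := hx
    obtain ⟨j, hj, rfl⟩ := hy
    rw [hcl i hi, hcl j hj]
    split_ifs <;> omega
  have hs := zk_unique s hbal
  rw [hcard, hsum] at hs
  rw [← hs, Finset.esymm_map_val]
  let col : Fin n → ℕ := fun x => x.val % r
  let C : Finset (Finset (Fin n)) :=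
    Finset.univ.filter (fun s => (SimpleGraph.turanGraph n r).IsNClique k s)
  have hC : turanCount n r k = C.card := by
    rw [turanCount, cliqueCount, ← Set.ncard_coe_finset]
    congr 1
    ext s
    simp [C]
  rw [hC]
  have hfib : ∑ t ∈ (Finset.range r).powersetCard k, (C.filter (fun s => s.image col = t)).card
      ≤ C.card := by
    rw [← Finset.card_biUnion]
    · exact Finset.card_le_card (Finset.biUnion_subset.2 (fun t _ => Finset.filter_subset _ _))
    · intro a _ b _ hab
      rw [Function.onFun, Finset.disjoint_left]
      intro s hs hs'
      exact hab ((Finset.mem_filter.1 hs).2.symm.trans (Finset.mem_filter.1 hs').2)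
  refine le_trans ?_ hfib
  refine Finset.sum_le_sum (fun t ht => ?_)
  rw [Finset.mem_powersetCard] at ht
  rw [← Finset.card_pi]
  have hcol : ∀ f ∈ t.pi (fun i => cl i), ∀ i (hi : i ∈ t), col (f i hi) = i := by
    intro f hf i hi
    have := Finset.mem_pi.1 hf i hi
    simpa [cl] using this
  refine Finset.card_le_card_of_injOn (fun f => t.attach.image (fun i => f i.1 i.2)) ?_ ?_
  · intro f hf
    have hf' := hcol f hf
    simp only [Finset.coe_filter, Set.mem_setOf_eq, C, Finset.mem_filter, Finset.mem_univ, true_and]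
    refine ⟨⟨?_, ?_⟩, ?_⟩
    · intro x hx y hy hxy
      simp only [Finset.coe_image, Set.mem_image, Finset.mem_coe] at hx hy
      obtain ⟨i, -, rfl⟩ := hx
      obtain ⟨j, -, rfl⟩ := hy
      rw [SimpleGraph.turanGraph_adj]
      intro h
      have h' : i.1 = j.1 := by
        rw [← hf' i.1 i.2, ← hf' j.1 j.2]; exact h
      exact hxy (by rw [Subtype.ext h'])
    · rw [Finset.card_image_of_injective, Finset.card_attach, ht.2]
      intro i j hij
      apply Subtype.ext
      rw [← hf' i.1 i.2, ← hf' j.1 j.2]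
      exact congrArg col hij
    · rw [Finset.image_image]
      ext x
      simp only [Finset.mem_image, Finset.mem_attach, true_and, Function.comp, hf']
      simp
  · intro f hf g hg hfg
    funext i hi
    have h1 : f i hi ∈ t.attach.image (fun i => g i.1 i.2) := by
      have : f i hi ∈ t.attach.image (fun i => f i.1 i.2) :=
        Finset.mem_image.2 ⟨⟨i, hi⟩, Finset.mem_attach _ _, rfl⟩
      simp only at hfg
      rwa [hfg] at this
    obtain ⟨j, -, hj⟩ := Finset.mem_image.1 h1
    have h2 : j.1 = i := by
      rw [← hcol f hf i hi, ← hcol g hg j.1 j.2, hj]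
    subst h2
    exact hj.symm

theorem zykov (n r : ℕ) (hn : 0 < n) (hr : 0 < r)
    (G : SimpleGraph (Fin n)) (hG : G.CliqueFree (r + 1)) (k : ℕ) (hk : 1 ≤ k) :
    cliqueCount G k ≤ turanCount n r k := by
  classical
  refine le_trans ?_ (zk_turan n r k hr)
  have h := zk_main G r Finset.univ ?_ k
  · rw [Finset.card_univ, Fintype.card_fin] at h
    refine le_trans (le_of_eq ?_) h
    rw [cliqueCount, ← Set.ncard_coe_finset]
    congr 1
    ext s
    simp [zkC, SimpleGraph.isNClique_iff, and_comm]
  · ext s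
    simp only [zkC, Finset.mem_filter, Finset.mem_powersetCard, Finset.notMem_empty, iff_false]
    rintro ⟨⟨-, h1⟩, h2⟩
    exact hG s ⟨h2, h1⟩
end

section
/- Let n and r be positive integers and let Δ be an r-colorable simplicial complex on n vertices. Then for every k with 2 ≤ k ≤ r, f_k(Δ) · t_{k-1}(n,r) ≤ f_{k-1}(Δ) · t_k(n,r). -/
/-- log-concavity -/
def PF2 (q : ℕ → ℕ) : Prop := ∀ i j, i ≤ j → q i * q (j+1) ≤ q (i+1) * q j

noncomputable def epoly {ι : Type*} (s : Finset ι) (a : ι → ℕ) : Polynomial ℕ :=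
  ∏ i ∈ s, (1 + Polynomial.C (a i) * Polynomial.X)

lemma coeff_step_zero (a : ℕ) (P : Polynomial ℕ) :
    ((1 + Polynomial.C a * Polynomial.X) * P).coeff 0 = P.coeff 0 := by
  simp [add_mul, mul_assoc]

lemma coeff_step_succ (a : ℕ) (P : Polynomial ℕ) (k : ℕ) :
    ((1 + Polynomial.C a * Polynomial.X) * P).coeff (k+1) = P.coeff (k+1) + a * P.coeff k := by
  simp [add_mul, mul_assoc]

lemma PF2_step (a : ℕ) (P : Polynomial ℕ) (h : PF2 P.coeff) :
    PF2 ((1 + Polynomial.C a * Polynomial.X) * P).coeff := by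
  intro i j hij
  rcases i with _ | i
  · rcases j with _ | j
    · rw [mul_comm]
    · simp only [coeff_step_zero, coeff_step_succ]
      have h1 := h 0 (j+1) (by omega)
      have h2 := h 0 j (by omega)
      simp only [Nat.zero_add] at *
      nlinarith [Nat.zero_le (a * a * P.coeff 0 * P.coeff j), Nat.mul_le_mul_left a h2, Nat.zero_le (a * P.coeff 0 * P.coeff (j+1))]
  · rcases j with _ | j
    · omega
    · simp only [coeff_step_succ]
      have h1 := h (i+1) (j+1) hij
      have h3 := h i j (by omega)
      have h2 : P.coeff i * P.coeff (j+1+1) ≤ P.coeff (i+1+1) * P.coeff j := by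
        rcases Nat.eq_or_lt_of_le hij with e | e
        · have : i = j := by omega
          subst this; rw [mul_comm]
        · exact (h i (j+1) (by omega)).trans (h (i+1) j (by omega))
      nlinarith [Nat.mul_le_mul_left a h2, Nat.mul_le_mul_left (a*a) h3]

lemma epoly_insert {ι : Type*} [DecidableEq ι] {s : Finset ι} {i : ι} (hi : i ∉ s) (a : ι → ℕ) :
    epoly (insert i s) a = (1 + Polynomial.C (a i) * Polynomial.X) * epoly s a := by
  simp [epoly, Finset.prod_insert hi]

lemma epoly_PF2 {ι : Type*} (s : Finset ι) (a : ι → ℕ) : PF2 (epoly s a).coeff := by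
  classical
  induction s using Finset.induction_on with
  | empty =>
    intro i j _
    simp [epoly, Polynomial.coeff_one]
  | insert i s hi ih =>
    rw [epoly_insert hi]; exact PF2_step _ _ ih

lemma epoly_zero {ι : Type*} (s : Finset ι) (a : ι → ℕ) : (epoly s a).coeff 0 = 1 := by
  classical
  induction s using Finset.induction_on with
  | empty => simp [epoly]
  | insert i s hi ih => rw [epoly_insert hi, coeff_step_zero, ih]

lemma epoly_succ_eq_zero {ι : Type*} (s : Finset ι) (a : ι → ℕ) (k : ℕ)
    (h : (epoly s a).coeff k = 0) : (epoly s a).coeff (k+1) = 0 := by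
  have := epoly_PF2 s a 0 k (Nat.zero_le _)
  rw [h, epoly_zero] at this
  omega

/-- two-factor step -/
lemma two_step (x y x' y' : ℕ) (P : Polynomial ℕ) (h : PF2 P.coeff) (hs : x + y = x' + y')
    (hp : x * y ≤ x' * y') (k : ℕ) :
    let A := (1 + Polynomial.C x * Polynomial.X) * ((1 + Polynomial.C y * Polynomial.X) * P)
    let B := (1 + Polynomial.C x' * Polynomial.X) * ((1 + Polynomial.C y' * Polynomial.X) * P)
    A.coeff k ≤ B.coeff k ∧ A.coeff (k+1) * B.coeff k ≤ A.coeff k * B.coeff (k+1) := by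
  intro A B
  obtain ⟨d, hd⟩ := Nat.exists_eq_add_of_le hp
  have c0 : ∀ u v : ℕ, ((1 + Polynomial.C u * Polynomial.X) *
      ((1 + Polynomial.C v * Polynomial.X) * P)).coeff 0 = P.coeff 0 := by
    intro u v; simp only [coeff_step_zero]
  have c1 : ∀ u v : ℕ, ((1 + Polynomial.C u * Polynomial.X) *
      ((1 + Polynomial.C v * Polynomial.X) * P)).coeff 1 = P.coeff 1 + (u+v) * P.coeff 0 := by
    intro u v
    rw [show 1 = 0 + 1 from rfl]
    simp only [coeff_step_zero, coeff_step_succ]; ring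
  have c2 : ∀ u v k : ℕ, ((1 + Polynomial.C u * Polynomial.X) *
      ((1 + Polynomial.C v * Polynomial.X) * P)).coeff (k+2) =
        P.coeff (k+2) + (u+v) * P.coeff (k+1) + u*v*P.coeff k := by
    intro u v k
    rw [show k+2 = k + 1 + 1 from rfl]
    simp only [coeff_step_succ]; ring
  rcases k with _ | _ | k
  · simp only [A, B, c0, c1, Nat.zero_add, hs, le_refl, true_and]
    rw [mul_comm]
  · have e : 0 + 1 + 1 = 0 + 2 := rfl
    simp only [A, B, e, c1, c2, Nat.zero_add, hs, le_refl, true_and, hd]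
    rw [mul_comm]
    gcongr
    omega
  · have e : k + 1 + 1 + 1 = (k+1) + 2 := rfl
    have e' : k + 1 + 1 = k + 2 := rfl
    simp only [A, B, e, e', c2, hs, hd]
    refine ⟨by gcongr; omega, ?_⟩
    have h1 := h k (k+2) (by omega)
    have h2 := h k (k+1) (by omega)
    have e1 : k + 1 + 2 = k + 3 := rfl
    have e2 : k + 1 + 1 = k + 2 := rfl
    have e3 : k + 2 + 1 = k + 3 := rfl
    simp only [e1, e2, e3] at *
    generalize P.coeff k = D at *
    generalize P.coeff (k+1) = C at *
    generalize P.coeff (k+2) = B at *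
    generalize P.coeff (k+3) = A at *
    generalize x' + y' = s at *
    generalize x * y = p at *
    nlinarith [Nat.mul_le_mul_left d h1, Nat.mul_le_mul_left (d*s) h2]

lemma bal_prod {r n : ℕ} (hr : 0 < r) (a : Fin r → ℕ) (hb : ∀ i j, a i ≤ a j + 1)
    (hs : ∑ i, a i = n) :
    epoly Finset.univ a = (1 + Polynomial.C (n/r) * Polynomial.X)^(r - n % r) *
      (1 + Polynomial.C (n/r+1) * Polynomial.X)^(n % r) := by
  classical
  have : Nonempty (Fin r) := ⟨⟨0, hr⟩⟩
  obtain ⟨i0, -, hi0⟩ := Finset.exists_min_image Finset.univ a Finset.univ_nonempty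
  set m := a i0
  set S := Finset.univ.filter (fun i => a i ≠ m)
  have hv : ∀ i, a i = if a i ≠ m then m + 1 else m := by
    intro i
    have h1 := hb i i0
    have h2 := hi0 i (Finset.mem_univ _)
    split_ifs <;> omega
  have hcomp : (Finset.univ.filter (fun i => ¬ (a i ≠ m))).card + S.card = r := by
    have := Finset.card_filter_add_card_filter_not (s := (Finset.univ : Finset (Fin r))) (fun i => a i ≠ m)
    rw [Finset.card_univ, Fintype.card_fin] at this
    rw [add_comm]; exact this
  have hpos : 0 < (Finset.univ.filter (fun i => ¬ (a i ≠ m))).card :=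
    Finset.card_pos.mpr ⟨i0, by simp [m]⟩
  have hn : n = S.card + r * m := by
    rw [← hs, Finset.sum_congr rfl (fun i _ => hv i), Finset.sum_ite]
    simp only [Finset.sum_const, smul_eq_mul]
    have h2 : r * m = ((Finset.univ.filter (fun i => ¬ (a i ≠ m))).card + S.card) * m := by
      rw [hcomp]
    rw [h2]
    simp only [S]; ring
  have hS : S.card < r := by omega
  have hq : n / r = m := by
    rw [hn, Nat.add_mul_div_left _ _ hr, Nat.div_eq_of_lt hS]; omega
  have hm : n % r = S.card := by
    rw [hn, Nat.add_mul_mod_self_left, Nat.mod_eq_of_lt hS]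
  rw [hq, hm, show r - S.card = (Finset.univ.filter (fun i => ¬ (a i ≠ m))).card by omega]
  rw [epoly, ← Finset.prod_filter_mul_prod_filter_not Finset.univ (fun i => a i ≠ m), mul_comm]
  congr 1
  · rw [← Finset.prod_const]
    refine Finset.prod_congr rfl fun i hi => ?_
    rw [Finset.mem_filter] at hi
    rw [not_not.mp hi.2]
  · rw [← Finset.prod_const]
    refine Finset.prod_congr rfl fun i hi => ?_
    rw [Finset.mem_filter] at hi
    rw [hv i, if_pos hi.2]

lemma ratio_bal {r n : ℕ} (hr : 0 < r) (b : Fin r → ℕ) (hb : ∀ i j, b i ≤ b j + 1)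
    (hbs : ∑ i, b i = n) (k : ℕ) : ∀ (N : ℕ) (a : Fin r → ℕ), ∑ i, a i = n → ∑ i, a i ^ 2 ≤ N →
    (epoly Finset.univ a).coeff (k+1) * (epoly Finset.univ b).coeff k ≤
      (epoly Finset.univ a).coeff k * (epoly Finset.univ b).coeff (k+1) := by
  classical
  intro N
  induction N using Nat.strong_induction_on with
  | _ N ih =>
  intro a has haN
  by_cases hbal : ∀ i j, a i ≤ a j + 1
  · rw [bal_prod hr a hbal has, bal_prod hr b hb hbs, mul_comm]
  push Not at hbal
  obtain ⟨i, j, hij⟩ := hbal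
  have hne : i ≠ j := by rintro rfl; omega
  set a' : Fin r → ℕ := fun l => if l = i then a i - 1 else if l = j then a j + 1 else a l with ha'
  set R : Finset (Fin r) := (Finset.univ.erase i).erase j
  have hjR : j ∉ R := by simp [R]
  have hiR : i ∉ insert j R := by simp [R, hne]
  have hU : (Finset.univ : Finset (Fin r)) = insert i (insert j R) := by
    ext l; simp [R]; tauto
  have hi' : a' i = a i - 1 := by simp [ha']
  have hj' : a' j = a j + 1 := by simp [ha', hne.symm]
  have hR : ∀ l ∈ R, a' l = a l := by
    intro l hl
    simp only [R, Finset.mem_erase] at hl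
    simp [ha', hl.1, hl.2.1]
  have hpR : epoly R a' = epoly R a := Finset.prod_congr rfl fun l hl => by rw [hR l hl]
  have hSR : ∑ l ∈ R, a' l = ∑ l ∈ R, a l := Finset.sum_congr rfl hR
  have hsum' : ∑ l, a' l = n := by
    rw [← has, hU, Finset.sum_insert hiR, Finset.sum_insert hjR, Finset.sum_insert hiR,
      Finset.sum_insert hjR, hSR, hi', hj']
    omega
  have hsq' : ∑ l, a' l ^ 2 < ∑ l, a l ^ 2 := by
    rw [hU, Finset.sum_insert hiR, Finset.sum_insert hjR, Finset.sum_insert hiR,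
      Finset.sum_insert hjR, Finset.sum_congr rfl (fun l hl => by rw [hR l hl]), hi', hj',
      ← add_assoc, ← add_assoc]
    obtain ⟨d, hd⟩ := Nat.exists_eq_add_of_lt hij
    rw [hd, show a j + 1 + d + 1 - 1 = a j + 1 + d by omega]
    nlinarith
  have h1 := ih _ (lt_of_lt_of_le hsq' haN) a' hsum' le_rfl
  have h2 := two_step (a i) (a j) (a' i) (a' j) (epoly R a) (epoly_PF2 _ _)
    (by rw [hi', hj']; omega)
    (by
      rw [hi', hj']
      obtain ⟨d, hd⟩ := Nat.exists_eq_add_of_lt hij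
      rw [hd, show a j + 1 + d + 1 - 1 = a j + 1 + d by omega]
      nlinarith) k
  simp only at h2
  have ea : epoly Finset.univ a = (1 + Polynomial.C (a i) * Polynomial.X) *
      ((1 + Polynomial.C (a j) * Polynomial.X) * epoly R a) := by
    rw [hU, epoly_insert hiR, epoly_insert hjR]
  have ea' : epoly Finset.univ a' = (1 + Polynomial.C (a' i) * Polynomial.X) *
      ((1 + Polynomial.C (a' j) * Polynomial.X) * epoly R a) := by
    rw [hU, epoly_insert hiR, epoly_insert hjR, hpR]
  rw [← ea, ← ea'] at h2
  obtain ⟨hle, hrat⟩ := h2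
  rcases Nat.eq_zero_or_pos ((epoly Finset.univ a').coeff k) with h0 | h0
  · rw [epoly_succ_eq_zero _ a k (by omega)]; simp
  · refine Nat.le_of_mul_le_mul_left ?_ h0
    calc _ = ((epoly Finset.univ a).coeff (k+1) * (epoly Finset.univ a').coeff k) *
          (epoly Finset.univ b).coeff k := by ring
      _ ≤ ((epoly Finset.univ a).coeff k * (epoly Finset.univ a').coeff (k+1)) *
          (epoly Finset.univ b).coeff k := Nat.mul_le_mul_right _ hrat
      _ = (epoly Finset.univ a).coeff k * ((epoly Finset.univ a').coeff (k+1) *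
          (epoly Finset.univ b).coeff k) := by ring
      _ ≤ (epoly Finset.univ a).coeff k * ((epoly Finset.univ a').coeff k *
          (epoly Finset.univ b).coeff (k+1)) := Nat.mul_le_mul_left _ h1
      _ = _ := by ring

open Classical in
/-- rainbow sets -/
noncomputable def rbw {n r : ℕ} (c : Fin n → Fin r) (k : ℕ) : Finset (Finset (Fin n)) :=
  Finset.univ.filter fun S => S.card = k ∧ Set.InjOn c S

noncomputable def cls {n r : ℕ} (c : Fin n → Fin r) (i : Fin r) : ℕ :=
  (Finset.univ.filter fun v => c v = i).card

lemma epoly_coeff {ι : Type*} (s : Finset ι) (a : ι → ℕ) (k : ℕ) :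
    (epoly s a).coeff k = ∑ t ∈ s.powersetCard k, ∏ i ∈ t, a i := by
  classical
  have h : ∀ t : Finset ι, ∏ i ∈ t, (Polynomial.C (a i) * Polynomial.X) =
      Polynomial.C (∏ i ∈ t, a i) * Polynomial.X ^ t.card := by
    intro t
    rw [Finset.prod_mul_distrib, Finset.prod_const, map_prod]
  rw [epoly, Finset.prod_one_add, Polynomial.finsetSum_coeff]
  simp only [h, Polynomial.coeff_C_mul, Polynomial.coeff_X_pow, mul_ite, mul_one, mul_zero]
  rw [← Finset.sum_filter, Finset.powersetCard_eq_filter]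
  refine Finset.sum_congr ?_ fun _ _ => rfl
  ext t; simp [eq_comm]

lemma rbw_card {n r : ℕ} (c : Fin n → Fin r) (k : ℕ) :
    (rbw c k).card = (epoly Finset.univ (cls c)).coeff k := by
  classical
  rw [epoly_coeff, Finset.card_eq_sum_card_fiberwise (f := fun S => S.image c)
    (t := Finset.univ.powersetCard k)]
  · refine Finset.sum_congr rfl fun t ht => ?_
    rw [Finset.mem_powersetCard] at ht
    have := Finset.card_pi t (fun i => Finset.univ.filter fun v => c v = i)
    simp only [cls]
    rw [← this]
    symm
    have key : ∀ f ∈ t.pi (fun i => Finset.univ.filter fun v => c v = i),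
        ∀ i (hi : i ∈ t), c (f i hi) = i := by
      intro f hf i hi
      have := Finset.mem_pi.mp hf i hi
      simpa using this
    refine Finset.card_bij (fun f _ => t.attach.image fun i => f i.1 i.2) ?_ ?_ ?_
    · intro f hf
      have hk := key f hf
      have himg : (t.attach.image fun i => f i.1 i.2).image c = t := by
        ext x
        simp only [Finset.mem_image, Finset.mem_attach, true_and, Subtype.exists]
        constructor
        · rintro ⟨v, ⟨i, hi, rfl⟩, rfl⟩; rwa [hk]
        · intro hx; exact ⟨_, ⟨x, hx, rfl⟩, hk x hx⟩
      have hinj : Set.InjOn c (t.attach.image fun i => f i.1 i.2 : Finset (Fin n)) := by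
        intro x hx y hy hxy
        simp only [Finset.coe_image, Set.mem_image, Finset.mem_coe, Finset.mem_attach, true_and, Subtype.exists] at hx hy
        obtain ⟨i, hi, rfl⟩ := hx
        obtain ⟨j, hj, rfl⟩ := hy
        rw [hk, hk] at hxy
        subst hxy; rfl
      simp only [Finset.mem_filter, rbw, Finset.mem_univ, true_and]
      refine ⟨⟨?_, hinj⟩, himg⟩
      rw [← Finset.card_image_of_injOn hinj, himg, ht.2]
    · intro f hf g hg hfg
      funext i hi
      have hm : f i hi ∈ t.attach.image fun i => g i.1 i.2 := by
        rw [← hfg]; exact Finset.mem_image.mpr ⟨⟨i, hi⟩, Finset.mem_attach _ _, rfl⟩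
      obtain ⟨⟨j, hj⟩, -, hjj⟩ := Finset.mem_image.mp hm
      have h1 := key f hf i hi
      rw [← hjj, key g hg] at h1
      subst h1
      exact hjj.symm
    · intro S hS
      simp only [Finset.mem_filter, rbw, Finset.mem_univ, true_and] at hS
      obtain ⟨⟨hc, hinj⟩, himg⟩ := hS
      have hex : ∀ i ∈ t, ∃ v ∈ S, c v = i := by
        intro i hi; rw [← himg] at hi; exact Finset.mem_image.mp hi
      choose f hf1 hf2 using hex
      refine ⟨f, Finset.mem_pi.mpr fun i hi => by simp [hf2], ?_⟩
      ext v
      simp only [Finset.mem_image, Finset.mem_attach, true_and, Subtype.exists]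
      constructor
      · rintro ⟨i, hi, rfl⟩; exact hf1 i hi
      · intro hv
        have hi : c v ∈ t := by rw [← himg]; exact Finset.mem_image_of_mem c hv
        exact ⟨c v, hi, hinj (hf1 _ _) hv (hf2 _ _)⟩
  · intro S hS
    simp only [Finset.mem_coe, Finset.mem_filter, rbw, Finset.mem_univ, true_and] at hS
    simp only [Finset.mem_coe, Finset.mem_powersetCard, Finset.subset_univ, true_and]
    rw [Finset.card_image_of_injOn hS.2, hS.1]

lemma turan_eq {n r : ℕ} (hr : 0 < r) (k : ℕ) :
    turanCount n r k = (rbw (fun v : Fin n => (⟨v % r, Nat.mod_lt _ hr⟩ : Fin r)) k).card := by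
  classical
  rw [turanCount, cliqueCount, ← Set.ncard_coe_finset]
  congr 1
  ext S
  simp only [Set.mem_setOf_eq, rbw, Finset.coe_filter, Finset.mem_univ, true_and,
    SimpleGraph.isNClique_iff, SimpleGraph.IsClique]
  rw [and_comm]
  refine and_congr_right fun _ => ?_
  constructor
  · intro h x hx y hy hxy
    by_contra hne
    have := h hx hy hne
    simp only [SimpleGraph.turanGraph] at this
    exact this (by simpa using hxy)
  · intro h x hx y hy hne
    simp only [SimpleGraph.turanGraph]
    intro hxy
    exact hne (h hx hy (by simpa using hxy))

lemma turan_cls {n r : ℕ} (hr : 0 < r) (i : Fin r) :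
    cls (fun v : Fin n => (⟨v % r, Nat.mod_lt _ hr⟩ : Fin r)) i =
      n / r + if (i : ℕ) % r < n % r then 1 else 0 := by
  rw [← Nat.count_modEq_card n hr, Nat.count_eq_card_filter_range, cls]
  refine Finset.card_bij (fun v _ => (v : ℕ)) ?_ ?_ ?_
  · intro v hv
    simp only [Finset.mem_filter, Finset.mem_univ, true_and, Fin.ext_iff] at hv
    exact Finset.mem_filter.mpr ⟨Finset.mem_range.mpr v.2, hv.trans (Nat.mod_eq_of_lt i.2).symm⟩
  · intro a _ b _ h; exact Fin.ext h
  · intro v hv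
    simp only [Finset.mem_filter, Finset.mem_range, Nat.ModEq, Nat.mod_eq_of_lt i.2] at hv
    exact ⟨⟨v, hv.1⟩, by simp [hv.2], rfl⟩

lemma cls_sum {n r : ℕ} (c : Fin n → Fin r) : ∑ i, cls c i = n := by
  classical
  have := Finset.card_eq_sum_card_fiberwise (f := c) (s := Finset.univ) (t := Finset.univ)
    (fun _ _ => Finset.mem_coe.mpr (Finset.mem_univ _))
  simpa [cls] using this.symm

lemma swap_ineq {n r : ℕ} (c : Fin n → Fin r) (Δ : Finset (Finset (Fin n)))
    (hΔ : ∀ F ∈ Δ, ∀ G ⊆ F, G ∈ Δ) (hc : ∀ F ∈ Δ, Set.InjOn c F) (j : ℕ) :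
    faceCount Δ (j+1) * (rbw c j).card ≤ faceCount Δ j * (rbw c (j+1)).card := by
  classical
  set A : ℕ → Finset (Finset (Fin n)) := fun k => Δ.filter fun F => F.card = k with hA
  have mA : ∀ {k F}, F ∈ A k ↔ F ∈ Δ ∧ F.card = k := by intro k F; simp [hA]
  have mR : ∀ {k F}, F ∈ rbw c k ↔ F.card = k ∧ Set.InjOn c F := by intro k F; simp [rbw]
  let w : Finset (Fin n) → Finset (Fin n) → ℚ := fun F Q => 1 / ((F.image c \ Q.image c).card : ℚ)
  -- sum over a transferable vertex is one
  have one : ∀ F Q : Finset (Fin n), Set.InjOn c F → Q.card < F.card →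
      ∑ v ∈ F.filter (fun v => c v ∉ Q.image c), w F Q = 1 := by
    intro F Q hF hlt
    have hcard : (F.filter (fun v => c v ∉ Q.image c)).card = (F.image c \ Q.image c).card := by
      rw [← Finset.card_image_of_injOn (f := c) (hF.mono (by intro x hx; simp at hx; exact hx.1))]
      congr 1
      ext x
      simp only [Finset.mem_image, Finset.mem_filter, Finset.mem_sdiff]
      constructor
      · rintro ⟨v, ⟨h1, h2⟩, rfl⟩; exact ⟨⟨v, h1, rfl⟩, h2⟩
      · rintro ⟨⟨v, h1, rfl⟩, h2⟩; exact ⟨v, ⟨h1, h2⟩, rfl⟩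
    have hpos : 0 < (F.image c \ Q.image c).card := by
      have h1 := Finset.le_card_sdiff (Q.image c) (F.image c)
      have h2 : (Q.image c).card ≤ Q.card := Finset.card_image_le
      rw [Finset.card_image_of_injOn hF] at h1
      omega
    rw [Finset.sum_const, hcard, nsmul_eq_mul]
    simp only [w]
    field_simp
  let s : Finset ((_ : Finset (Fin n) × Finset (Fin n)) × Fin n) :=
    (A (j+1) ×ˢ rbw c j).sigma fun p => p.1.filter (fun v => c v ∉ p.2.image c)
  let t : Finset ((_ : Finset (Fin n) × Finset (Fin n)) × Fin n) :=
    (A j ×ˢ rbw c (j+1)).sigma fun p => p.2.filter (fun v => c v ∉ p.1.image c)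
  have hs : ((A (j+1)).card * (rbw c j).card : ℚ) = ∑ x ∈ s, w x.1.1 x.1.2 := by
    rw [Finset.sum_sigma, Finset.sum_congr rfl (g := fun _ => (1:ℚ))]
    · simp
    · rintro ⟨F, Q⟩ h
      rw [Finset.mem_product, mA, mR] at h
      exact one F Q (hc F h.1.1) (by simp only at h; omega)
  have ht : ((A j).card * (rbw c (j+1)).card : ℚ) = ∑ x ∈ t, w x.1.2 x.1.1 := by
    rw [Finset.sum_sigma, Finset.sum_congr rfl (g := fun _ => (1:ℚ))]
    · simp
    · rintro ⟨F, Q⟩ h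
      rw [Finset.mem_product, mA, mR] at h
      exact one Q F h.2.2 (by simp only at h; omega)
  let e : ((_ : Finset (Fin n) × Finset (Fin n)) × Fin n) →
      ((_ : Finset (Fin n) × Finset (Fin n)) × Fin n) :=
    fun x => ⟨(x.1.1.erase x.2, insert x.2 x.1.2), x.2⟩
  have ms : ∀ {F Q v}, (⟨(F, Q), v⟩ : ((_ : Finset (Fin n) × Finset (Fin n)) × Fin n)) ∈ s ↔
      ((F ∈ Δ ∧ F.card = j+1) ∧ (Q.card = j ∧ Set.InjOn c Q)) ∧ v ∈ F ∧ c v ∉ Q.image c := by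
    intro F Q v
    simp only [s, Finset.mem_sigma, Finset.mem_product, mA, mR, Finset.mem_filter]
  have mt : ∀ {F Q v}, (⟨(F, Q), v⟩ : ((_ : Finset (Fin n) × Finset (Fin n)) × Fin n)) ∈ t ↔
      ((F ∈ Δ ∧ F.card = j) ∧ (Q.card = j+1 ∧ Set.InjOn c Q)) ∧ v ∈ Q ∧ c v ∉ F.image c := by
    intro F Q v
    simp only [t, Finset.mem_sigma, Finset.mem_product, mA, mR, Finset.mem_filter]
  have einj : Set.InjOn e s := by
    rintro ⟨⟨F, Q⟩, v⟩ h ⟨⟨F', Q'⟩, v'⟩ h' heq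
    rw [Finset.mem_coe, ms] at h h'
    simp only [e, Sigma.mk.injEq, Prod.mk.injEq, heq_eq_eq] at heq
    obtain ⟨⟨h1, h2⟩, rfl⟩ := heq
    have q1 : v ∉ Q := fun hh => h.2.2 (Finset.mem_image_of_mem c hh)
    have q2 : v ∉ Q' := fun hh => h'.2.2 (Finset.mem_image_of_mem c hh)
    have hF : F = F' := by
      rw [← Finset.insert_erase h.2.1, h1, Finset.insert_erase h'.2.1]
    have hQ : Q = Q' := by
      rw [← Finset.erase_insert q1, h2, Finset.erase_insert q2]
    rw [hF, hQ]
  have emap : ∀ x ∈ s, e x ∈ t := by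
    rintro ⟨⟨F, Q⟩, v⟩ h
    rw [ms] at h
    obtain ⟨⟨⟨hF, hFc⟩, hQc, hQ⟩, hv, hvQ⟩ := h
    have q1 : v ∉ Q := fun hh => hvQ (Finset.mem_image_of_mem c hh)
    simp only [e]
    rw [mt]
    refine ⟨⟨⟨hΔ F hF _ (Finset.erase_subset _ _), by rw [Finset.card_erase_of_mem hv]; omega⟩,
      by rw [Finset.card_insert_of_notMem q1, hQc], ?_⟩, Finset.mem_insert_self _ _, ?_⟩
    · rw [Finset.coe_insert, Set.injOn_insert (by simpa using q1)]
      refine ⟨hQ, ?_⟩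
      simpa using hvQ
    · intro hm
      obtain ⟨u, hu, huv⟩ := Finset.mem_image.mp hm
      rw [Finset.mem_erase] at hu
      exact hu.1 (hc F hF hu.2 hv huv)
  have ew : ∀ x ∈ s, w x.1.1 x.1.2 = w (e x).1.2 (e x).1.1 := by
    rintro ⟨⟨F, Q⟩, v⟩ h
    have h' := emap _ h
    simp only [e] at h'
    rw [ms] at h
    rw [mt] at h'
    obtain ⟨⟨⟨hF, hFc⟩, hQc, hQ⟩, hv, hvQ⟩ := h
    obtain ⟨⟨⟨hF', hFc'⟩, hQc', hQ'⟩, hv', hvQ'⟩ := h'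
    have i1 : (insert v Q).image c \ (F.erase v).image c = insert (c v) (Q.image c \ F.image c) := by
      have : F.image c = insert (c v) ((F.erase v).image c) := by
        rw [← Finset.image_insert, Finset.insert_erase hv]
      rw [this, Finset.image_insert]
      ext x
      simp only [Finset.mem_sdiff, Finset.mem_insert]
      by_cases hx : x = c v
      · subst hx; simp only [true_or, true_and]; exact iff_of_true hvQ' trivial
      · simp only [hx, false_or]
    have i2 : c v ∉ Q.image c \ F.image c := by
      intro hh; exact hvQ (Finset.mem_sdiff.mp hh).1
    have c1 := Finset.card_sdiff_add_card_inter (F.image c) (Q.image c)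
    have c2 := Finset.card_sdiff_add_card_inter (Q.image c) (F.image c)
    rw [Finset.card_image_of_injOn (hc F hF), hFc] at c1
    rw [Finset.card_image_of_injOn hQ, hQc, Finset.inter_comm] at c2
    have : (F.image c \ Q.image c).card = ((insert v Q).image c \ (F.erase v).image c).card := by
      rw [i1, Finset.card_insert_of_notMem i2]; omega
    simp only [w, e, this]
  have final : ((A (j+1)).card * (rbw c j).card : ℚ) ≤ (A j).card * (rbw c (j+1)).card := by
    rw [hs, ht, Finset.sum_congr rfl ew, ← Finset.sum_image (f := fun x => w x.1.2 x.1.1) einj]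
    refine Finset.sum_le_sum_of_subset_of_nonneg ?_ ?_
    · intro y hy
      obtain ⟨x, hx, rfl⟩ := Finset.mem_image.mp hy
      exact emap x hx
    · intro x _ _; simp only [w]; positivity
  exact_mod_cast final



/-- For every `r`-colorable simplicial complex `Δ` on `n` vertices and every
`2 ≤ k ≤ r`, one has `f_k(Δ) t_{k-1}(n,r) ≤ f_{k-1}(Δ) t_k(n,r)`. -/
theorem faceCount_ratio_le_turan (n r : ℕ) (hn : 0 < n) (hr : 0 < r)
    (Δ : Finset (Finset (Fin n))) (hΔ : IsComplex Δ)
    (hcol : (underlyingGraph Δ).Colorable r)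
    (k : ℕ) (hk2 : 2 ≤ k) (hkr : k ≤ r) :
    faceCount Δ k * turanCount n r (k - 1) ≤ faceCount Δ (k - 1) * turanCount n r k := by
  classical
  obtain ⟨C⟩ := hcol
  obtain ⟨j, rfl⟩ : ∃ j, k = j + 1 := ⟨k - 1, by omega⟩
  rw [Nat.add_sub_cancel]
  have hc : ∀ F ∈ Δ, Set.InjOn C F := by
    intro F hF x hx y hy hxy
    by_contra hne
    have hadj : (underlyingGraph Δ).Adj x y :=
      ⟨hne, hΔ.1 F hF _ (by
        intro z hz
        simp only [Finset.mem_insert, Finset.mem_singleton] at hz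
        rcases hz with rfl | rfl
        · exact hx
        · exact hy)⟩
    exact C.valid hadj hxy
  have h1 := swap_ineq C Δ hΔ.1 hc j
  have h2 := ratio_bal hr (cls (fun v : Fin n => (⟨v % r, Nat.mod_lt _ hr⟩ : Fin r)))
    (by intro i i'; rw [turan_cls hr, turan_cls hr]; split_ifs <;> omega) (cls_sum _) j _ (cls C)
    (cls_sum _) le_rfl
  have hle : faceCount Δ (j+1) ≤ (rbw C (j+1)).card := by
    refine Finset.card_le_card fun F hF => ?_
    rw [Finset.mem_filter] at hF
    simp only [rbw, Finset.mem_filter, Finset.mem_univ, true_and]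
    exact ⟨hF.2, hc F hF.1⟩
  have hz : (rbw C j).card = 0 → (rbw C (j+1)).card = 0 := by
    rw [rbw_card, rbw_card]; exact epoly_succ_eq_zero _ _ _
  rw [← rbw_card, ← rbw_card, ← rbw_card, ← rbw_card, ← turan_eq hr, ← turan_eq hr] at h2
  rcases Nat.eq_zero_or_pos (rbw C j).card with h0 | h0
  · have := hz h0
    rw [show faceCount Δ (j+1) = 0 by omega]; simp
  · refine Nat.le_of_mul_le_mul_left ?_ h0
    calc _ = (faceCount Δ (j+1) * (rbw C j).card) * turanCount n r j := by ring
      _ ≤ (faceCount Δ j * (rbw C (j+1)).card) * turanCount n r j := Nat.mul_le_mul_right _ h1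
      _ = faceCount Δ j * ((rbw C (j+1)).card * turanCount n r j) := by ring
      _ ≤ faceCount Δ j * ((rbw C j).card * turanCount n r (j+1)) := Nat.mul_le_mul_left _ h2
      _ = _ := by ring
end

section
/- Let G be a finite simple graph and let u, v be distinct nonadjacent vertices of G. Then for every k ≥ 1, c_k(G_{u→v}) = c_k(G) − c_{k-1}(G[N(u)]) + c_{k-1}(G[N(v)]), where G[N(w)] denotes the subgraph of G induced on the neighborhood of w. -/
/-- The graph `G_{u→v}`: delete all edges incident to `u` and join `u` to every
neighbor of `v` in `G`. -/
def redirect {V : Type*} (G : SimpleGraph V) (u v : V) : SimpleGraph V where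
  Adj x y :=
    (x ≠ u ∧ y ≠ u ∧ G.Adj x y) ∨ (x = u ∧ y ≠ u ∧ G.Adj v y) ∨
      (y = u ∧ x ≠ u ∧ G.Adj v x)
  symm := by
    constructor
    rintro x y (⟨h1, h2, h3⟩ | ⟨h1, h2, h3⟩ | ⟨h1, h2, h3⟩)
    · exact Or.inl ⟨h2, h1, h3.symm⟩
    · exact Or.inr (Or.inr ⟨h1, h2, h3⟩)
    · exact Or.inr (Or.inl ⟨h1, h2, h3⟩)
  loopless := by
    constructor
    rintro x (⟨h1, h2, h3⟩ | ⟨h1, h2, h3⟩ | ⟨h1, h2, h3⟩)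
    · exact G.loopless.irrefl x h3
    · exact h2 h1
    · exact h2 h1

theorem aux_induce {V : Type*} [Fintype V] [DecidableEq V] (G : SimpleGraph V) (S : Set V)
    (k : ℕ) : cliqueCount (G.induce S) k =
      {s : Finset V | G.IsNClique k s ∧ ∀ x ∈ s, x ∈ S}.ncard := by
  classical
  unfold cliqueCount
  refine Set.ncard_congr (fun s _ => s.map (Function.Embedding.subtype _)) ?_ ?_ ?_
  · intro s hs
    simp only [Set.mem_ofPred_eq, SimpleGraph.isNClique_iff, SimpleGraph.IsClique,
      Set.Pairwise, Finset.card_map] at hs ⊢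
    refine ⟨⟨?_, hs.2⟩, ?_⟩
    · intro x hx y hy hxy
      simp only [Finset.coe_map, Set.mem_image, Finset.mem_coe] at hx hy
      obtain ⟨a, ha, rfl⟩ := hx
      obtain ⟨b, hb, rfl⟩ := hy
      exact hs.1 ha hb (fun h => hxy (by rw [h]))
    · intro x hx
      obtain ⟨a, ha, rfl⟩ := Finset.mem_map.1 hx
      exact a.2
  · intro a b _ _ h
    exact Finset.map_injective _ h
  · intro s ⟨hs, hS⟩
    have hm : (s.subtype (fun x => x ∈ S)).map (Function.Embedding.subtype _) = s :=
      Finset.subtype_map_of_mem hS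
    refine ⟨s.subtype (fun x => x ∈ S), ?_, hm⟩
    simp only [Set.mem_ofPred_eq, SimpleGraph.isNClique_iff, SimpleGraph.IsClique,
      Set.Pairwise] at hs ⊢
    refine ⟨?_, ?_⟩
    · intro x hx y hy hxy
      have hx' := Finset.mem_subtype.1 hx
      have hy' := Finset.mem_subtype.1 hy
      exact hs.1 hx' hy' (fun h => hxy (Subtype.ext h))
    · rw [← hs.2, ← hm, Finset.card_map, hm]

theorem aux_split {V : Type*} [Fintype V] [DecidableEq V] (G : SimpleGraph V) (w : V)
    (k : ℕ) : cliqueCount G (k + 1) =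
      {s : Finset V | G.IsNClique (k + 1) s ∧ w ∉ s}.ncard +
      {s : Finset V | G.IsNClique k s ∧ ∀ x ∈ s, G.Adj w x}.ncard := by
  classical
  have e : {s : Finset V | G.IsNClique k s ∧ ∀ x ∈ s, G.Adj w x}.ncard =
      {s : Finset V | G.IsNClique (k + 1) s ∧ w ∈ s}.ncard := by
    refine Set.ncard_congr (fun s _ => insert w s) ?_ ?_ ?_
    · intro s ⟨hs, hw⟩
      exact ⟨hs.insert hw, Finset.mem_insert_self _ _⟩
    · intro a b ⟨_, ha⟩ ⟨_, hb⟩ h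
      have ha' : w ∉ a := fun h => G.loopless.irrefl w (ha w h)
      have hb' : w ∉ b := fun h => G.loopless.irrefl w (hb w h)
      have := congrArg (fun t => Finset.erase t w) h
      simpa [Finset.erase_insert, ha', hb'] using this
    · intro s ⟨hs, hw⟩
      refine ⟨s.erase w, ⟨⟨?_, ?_⟩, ?_⟩, Finset.insert_erase hw⟩
      · exact hs.isClique.subset (by simp)
      · rw [Finset.card_erase_of_mem hw, hs.card_eq]; rfl
      · intro x hx
        exact hs.isClique hw (Finset.mem_of_mem_erase hx) (Finset.ne_of_mem_erase hx).symm
  rw [e, ← Set.ncard_union_eq]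
  · unfold cliqueCount
    congr 1
    ext s
    simp only [Set.mem_ofPred_eq, Set.mem_union]
    tauto
  · rw [Set.disjoint_left]
    exact fun s h h' => h.2 h'.2

theorem aux_avoid {V : Type*} (G : SimpleGraph V) (u v : V) (s : Finset V) (hu : u ∉ s)
    (k : ℕ) : (redirect G u v).IsNClique k s ↔ G.IsNClique k s := by
  have hne : ∀ x ∈ s, x ≠ u := fun x hx h => hu (h ▸ hx)
  simp only [SimpleGraph.isNClique_iff, SimpleGraph.IsClique, Set.Pairwise, redirect]
  refine and_congr_left fun _ => ⟨fun h x hx y hy hxy => ?_, fun h x hx y hy hxy => ?_⟩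
  · have h1 := hne x hx
    have h2 := hne y hy
    have := h hx hy hxy
    tauto
  · exact Or.inl ⟨hne x hx, hne y hy, h hx hy hxy⟩

/-- For a finite graph `G` with distinct nonadjacent vertices `u, v` and any `k ≥ 1`,
`c_k(G_{u→v}) = c_k(G) − c_{k-1}(G[N(u)]) + c_{k-1}(G[N(v)])`, where `G[N(w)]` is the
subgraph of `G` induced on the neighborhood of `w`. -/
theorem cliqueCount_redirect {V : Type*} [Fintype V] [DecidableEq V]
    (G : SimpleGraph V) (u v : V) (huv : u ≠ v) (hadj : ¬ G.Adj u v)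
    (k : ℕ) (hk : 1 ≤ k) :
    (cliqueCount (redirect G u v) k : ℤ) =
      (cliqueCount G k : ℤ) -
        cliqueCount (G.induce (G.neighborSet u)) (k - 1) +
        cliqueCount (G.induce (G.neighborSet v)) (k - 1) := by
  obtain ⟨k, rfl⟩ : ∃ m, k = m + 1 := ⟨k - 1, by omega⟩
  rw [Nat.add_sub_cancel, aux_induce, aux_induce, aux_split G u, aux_split (redirect G u v) u]
  have e1 : {s : Finset V | (redirect G u v).IsNClique (k + 1) s ∧ u ∉ s} =
      {s : Finset V | G.IsNClique (k + 1) s ∧ u ∉ s} := by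
    ext s
    exact and_congr_left fun hu => aux_avoid G u v s hu _
  have hA : ∀ x, (redirect G u v).Adj u x ↔ G.Adj v x := by
    intro x
    have : G.Adj v x → x ≠ u := by
      rintro h rfl
      exact hadj h.symm
    simp only [redirect]
    tauto
  have e2 : {s : Finset V | (redirect G u v).IsNClique k s ∧ ∀ x ∈ s, (redirect G u v).Adj u x} =
      {s : Finset V | G.IsNClique k s ∧ ∀ x ∈ s, G.Adj v x} := by
    ext s
    simp only [Set.mem_ofPred_eq, hA]
    exact and_congr_left fun h => aux_avoid G u v s (fun hu => hadj (h u hu).symm) _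
  rw [e1, e2]
  simp only [SimpleGraph.mem_neighborSet]
  push_cast
  ring
end

section
/- Let Δ be a simplicial complex and let u, v be distinct vertices of Δ such that {u, v} is not a face of Δ. Then for every j ≥ 1, f_j(Δ_{u→v}) = f_j(Δ) − f_{j-1}(link_Δ(u)) + f_{j-1}(link_Δ(v)). -/
/-- The link of a vertex `v` in `Δ`: all faces `F ∈ Δ` with `v ∉ F` and `F ∪ {v} ∈ Δ`. -/
def link {V : Type*} [DecidableEq V] (Δ : Finset (Finset V)) (v : V) :
    Finset (Finset V) :=
  Δ.filter fun F => v ∉ F ∧ insert v F ∈ Δ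

/-- The complex `Δ_{u→v}`: remove every face properly containing `{u}` and add the
face `F ∪ {u}` for every face `F` of `link_Δ(v)`. -/
def redirectComplex {V : Type*} [DecidableEq V] (Δ : Finset (Finset V)) (u v : V) :
    Finset (Finset V) :=
  (Δ.filter fun F => u ∉ F ∨ F = {u}) ∪ (link Δ v).image fun F => insert u F

theorem count_aux {V : Type*} [DecidableEq V] (A L : Finset (Finset V)) (u : V)
    (hA : ∀ F ∈ A, u ∉ F) (hL : ∀ F ∈ L, u ∉ F) (j : ℕ) (hj : 1 ≤ j) :
    faceCount (A ∪ L.image fun F => insert u F) j = faceCount A j + faceCount L (j - 1) := by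
  unfold faceCount
  rw [Finset.filter_union, Finset.card_union_of_disjoint]
  · congr 1
    have h : (L.image fun F => insert u F).filter (fun F => F.card = j) =
        (L.filter fun F => F.card = j - 1).image fun F => insert u F := by
      ext G
      simp only [Finset.mem_filter, Finset.mem_image]
      constructor
      · rintro ⟨⟨F, hF, rfl⟩, hc⟩
        rw [Finset.card_insert_of_notMem (hL F hF)] at hc
        exact ⟨F, ⟨hF, by omega⟩, rfl⟩
      · rintro ⟨F, ⟨hF, hc⟩, rfl⟩
        refine ⟨⟨F, hF, rfl⟩, ?_⟩
        rw [Finset.card_insert_of_notMem (hL F hF)]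
        omega
    rw [h, Finset.card_image_of_injOn]
    intro F hF G hG hFG
    have h1 := hL F (Finset.mem_filter.1 hF).1
    have h2 := hL G (Finset.mem_filter.1 hG).1
    have h3 : insert u F = insert u G := hFG
    rw [← Finset.erase_insert h1, h3, Finset.erase_insert h2]
  · rw [Finset.disjoint_left]
    intro F h1 h2
    obtain ⟨G, _, rfl⟩ := Finset.mem_image.1 (Finset.mem_filter.1 h2).1
    exact hA _ (Finset.mem_filter.1 h1).1 (Finset.mem_insert_self _ _)

/-- If `u, v` are distinct vertices of a simplicial complex `Δ` with `{u,v} ∉ Δ`,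
then for every `j ≥ 1` one has
`f_j(Δ_{u→v}) = f_j(Δ) − f_{j-1}(link_Δ(u)) + f_{j-1}(link_Δ(v))`. -/
theorem faceCount_redirectComplex {V : Type*} [Fintype V] [DecidableEq V]
    (Δ : Finset (Finset V)) (hΔ : IsComplex Δ) (u v : V) (huv : u ≠ v)
    (hmem : ({u, v} : Finset V) ∉ Δ) (j : ℕ) (hj : 1 ≤ j) :
    (faceCount (redirectComplex Δ u v) j : ℤ) =
      (faceCount Δ j : ℤ) - faceCount (link Δ u) (j - 1) +
        faceCount (link Δ v) (j - 1) := by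
  obtain ⟨hd, hs⟩ := hΔ
  have hLv : ∀ F ∈ link Δ v, u ∉ F := by
    intro F hF hu
    refine hmem (hd _ (Finset.mem_filter.1 hF).2.2 _ ?_)
    intro x hx
    simp only [Finset.mem_insert, Finset.mem_singleton] at hx ⊢
    rcases hx with rfl | rfl
    · exact Or.inr hu
    · exact Or.inl rfl
  have hLu : ∀ F ∈ link Δ u, u ∉ F := fun F hF => (Finset.mem_filter.1 hF).2.1
  have hA : ∀ F ∈ Δ.filter (fun F => u ∉ F), u ∉ F := fun F hF => (Finset.mem_filter.1 hF).2
  have e1 : redirectComplex Δ u v =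
      Δ.filter (fun F => u ∉ F) ∪ (link Δ v).image fun F => insert u F := by
    ext G
    simp only [redirectComplex, Finset.mem_union, Finset.mem_filter]
    constructor
    · rintro (⟨hG, h | rfl⟩ | h)
      · exact Or.inl ⟨hG, h⟩
      · refine Or.inr (Finset.mem_image.2 ⟨∅, Finset.mem_filter.2 ⟨hd _ hG _ (by simp), by simp, ?_⟩, by simp⟩)
        simpa using hs v
      · exact Or.inr h
    · rintro (⟨hG, h⟩ | h)
      · exact Or.inl ⟨hG, Or.inl h⟩
      · exact Or.inr h
  have e2 : Δ = Δ.filter (fun F => u ∉ F) ∪ (link Δ u).image fun F => insert u F := by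
    ext G
    simp only [link, Finset.mem_union, Finset.mem_filter, Finset.mem_image]
    constructor
    · intro hG
      by_cases h : u ∈ G
      · exact Or.inr ⟨G.erase u, ⟨hd _ hG _ (Finset.erase_subset _ _), by simp,
          by rwa [Finset.insert_erase h]⟩, Finset.insert_erase h⟩
      · exact Or.inl ⟨hG, h⟩
    · rintro (⟨hG, _⟩ | ⟨F, ⟨_, _, h⟩, rfl⟩)
      · exact hG
      · exact h
  have c1 := count_aux _ _ u hA hLv j hj
  have c2 := count_aux _ _ u hA hLu j hj
  rw [← e1] at c1
  rw [← e2] at c2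
  rw [c1, c2]
  push_cast
  ring
end

section
/- Let Δ be an r-colorable simplicial complex and let u, v be distinct vertices of Δ such that {u, v} is not a face of Δ. Then the simplicial complex Δ_{u→v} is r-colorable. -/
/-- If `Δ` is an `r`-colorable simplicial complex and `u, v` are distinct vertices
with `{u,v} ∉ Δ`, then `Δ_{u→v}` is also `r`-colorable. -/
theorem redirectComplex_colorable {V : Type*} [Fintype V] [DecidableEq V]
    (Δ : Finset (Finset V)) (hΔ : IsComplex Δ) (u v : V) (huv : u ≠ v)
    (hmem : ({u, v} : Finset V) ∉ Δ) (r : ℕ)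
    (hcol : (underlyingGraph Δ).Colorable r) :
    (underlyingGraph (redirectComplex Δ u v)).Colorable r := by
  obtain ⟨c⟩ := hcol
  have key : ∀ y, u ≠ y → ({u, y} : Finset V) ∈ redirectComplex Δ u v → c v ≠ c y := by
    intro y hy h
    apply c.valid
    simp only [redirectComplex, link, Finset.mem_union, Finset.mem_filter,
      Finset.mem_image] at h
    rcases h with ⟨_, h | h⟩ | ⟨F, ⟨_, hvF, hF⟩, h⟩
    · simp at h
    · have : y ∈ ({u} : Finset V) := by rw [← h]; simp
      exact absurd (Finset.mem_singleton.1 this).symm hy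
    · have h1 : y ∈ insert u F := by rw [h]; simp
      have hyF : y ∈ F := (Finset.mem_insert.1 h1).resolve_left (Ne.symm hy)
      refine ⟨fun e => hvF (e ▸ hyF), hΔ.1 _ hF _ ?_⟩
      intro z hz
      simp only [Finset.mem_insert, Finset.mem_singleton] at hz ⊢
      rcases hz with rfl | rfl
      · exact Or.inl rfl
      · exact Or.inr hyF
  refine ⟨SimpleGraph.Coloring.mk (fun x => if x = u then c v else c x) ?_⟩
  rintro x y ⟨hxy, h⟩
  by_cases hx : x = u
  · subst hx
    simpa [Ne.symm hxy] using key y hxy h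
  by_cases hy : y = u
  · subst hy
    rw [Finset.pair_comm] at h
    simpa [hxy] using (key x (Ne.symm hxy) h).symm
  simp only [hx, hy, if_false]
  apply c.valid
  refine ⟨hxy, ?_⟩
  simp only [redirectComplex, Finset.mem_union, Finset.mem_filter, Finset.mem_image] at h
  rcases h with ⟨h, _⟩ | ⟨F, _, h⟩
  · exact h
  · have h1 : u ∈ ({x, y} : Finset V) := by rw [← h]; simp
    simp only [Finset.mem_insert, Finset.mem_singleton] at h1
    rcases h1 with h1 | h1
    · exact absurd h1.symm hx
    · exact absurd h1.symm hy
end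

section
/- Let k ≥ 1 and let Δ be a simplicial complex with a distinguished vertex v₀ satisfying: (i) for every face F of Δ with v₀ ∉ F and every u ∈ F, the set (F \ {u}) ∪ {v₀} is a face of Δ; and (ii) for every set S of cardinality at least k+1, if every proper nonempty subset of S is a face of Δ, then S is a face of Δ. Then every face F of Δ with |F| ≥ k, v₀ ∉ F, all of whose vertices are adjacent to v₀ in the underlying graph of Δ, satisfies F ∪ {v₀} ∈ Δ; that is, every such face of the induced subcomplex on the vertices of link_Δ(v₀) is itself a face of link_Δ(v₀). -/
/-- Let `k ≥ 1` and let `Δ` be a simplicial complex with a vertex `v₀` such that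
(i) for every face `F ∈ Δ` with `v₀ ∉ F` and every `u ∈ F`, the set
`(F \ {u}) ∪ {v₀}` is a face of `Δ`, and (ii) every set `S` with `|S| ≥ k + 1` all of
whose proper nonempty subsets are faces of `Δ` is itself a face of `Δ`.  Then every
face `F ∈ Δ` with `|F| ≥ k` and `v₀ ∉ F`, all of whose vertices are adjacent to `v₀`
in the underlying graph of `Δ`, satisfies `F ∪ {v₀} ∈ Δ`. -/
theorem face_of_induced_mem_link {V : Type*} [Fintype V] [DecidableEq V]
    (k : ℕ) (hk : 1 ≤ k) (Δ : Finset (Finset V)) (hΔ : IsComplex Δ) (v₀ : V)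
    (h1 : ∀ F ∈ Δ, v₀ ∉ F → ∀ u ∈ F, (F \ {u}) ∪ {v₀} ∈ Δ)
    (h2 : ∀ S : Finset V, k + 1 ≤ S.card →
      (∀ T ⊂ S, T.Nonempty → T ∈ Δ) → S ∈ Δ) :
    ∀ F ∈ Δ, k ≤ F.card → v₀ ∉ F →
      (∀ w ∈ F, (underlyingGraph Δ).Adj v₀ w) → F ∪ {v₀} ∈ Δ := by
  intro F hF hc hv _
  apply h2
  · rw [Finset.card_union_of_disjoint (by simpa using hv)]
    simpa using hc
  · intro T hT _
    obtain ⟨hs, x, hx, hxT⟩ := Finset.ssubset_iff_exists_subset_erase.mp hT |>.elim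
      (fun x h => (⟨hT.1, x, h.1, fun hh => by simpa using h.2 hh⟩ :
        T ⊆ F ∪ {v₀} ∧ ∃ x, x ∈ F ∪ {v₀} ∧ x ∉ T))
    by_cases hxv : x = v₀
    · subst hxv
      refine hΔ.1 F hF T fun y hy => ?_
      have := hs hy
      grind
    · have hxF : x ∈ F := by grind
      refine hΔ.1 _ (h1 F hF hv x hxF) T fun y hy => ?_
      have := hs hy
      grind
end
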